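/- arXiv:1606.08060 — 3 statements merged into one kernel-verified Lean document; each statement's English description precedes it below -/
import Mathlib

section
/- Fix an integer N ≥ 2 and L > 0, and set a := 1/N. For any initial data (x_i(0))_{i∈ℤ} with x_{i+N}(0) = x_i(0) + L and x_i(0) < x_{i+1}(0) for all i, the step-flow ODE system has a global-in-time C¹ solution x : [0,∞) → ℝ^ℤ with x(0) the given data; in particular, for all t ≥ 0 the solution satisfies x_{i+N}(t) = x_i(t) + L and x_i(t) < x_{i+1}(t), so no two steps ever collide and no step escapes to infinity in finite time. -/
open Real Filter Topology

/-- The chemical potential `f_i` of a (periodic) step configuration `c : ℤ → ℝ`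
(with `c (i+N) = c i + L`), `a := 1/N`:
`f_i = −(2πa/L²)·Σ_{j≠i (one period)} cot(π(c j − c i)/L)
      + (1/(c_{i+1}−c_i) − 1/(c_i−c_{i−1})) + (a²/(c_{i+1}−c_i)³ − a²/(c_i−c_{i−1})³)`.
The lattice sum is taken over the period window `j ∈ {i+1, …, i+N−1}`, which by
`π`-periodicity of `cot` agrees with `Σ_{j=1,j≠i}^N` and makes `f_{i+N} = f_i` manifest. -/
noncomputable def fchem (N : ℕ) (L : ℝ) (c : ℤ → ℝ) (i : ℤ) : ℝ :=
  -(2 * π * (N:ℝ)⁻¹ / L ^ 2) *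
      (∑ j ∈ Finset.Ico (i + 1) (i + (N:ℤ)), Real.cot (π * (c j - c i) / L))
    + (1 / (c (i + 1) - c i) - 1 / (c i - c (i - 1)))
    + ((N:ℝ)⁻¹ ^ 2 / (c (i + 1) - c i) ^ 3 - (N:ℝ)⁻¹ ^ 2 / (c i - c (i - 1)) ^ 3)

/-- The right-hand side of the step-flow ODE system:
`dx_i/dt = (1/a)·[(f_{i+1}−f_i)/(x_{i+1}−x_i) − (f_i−f_{i−1})/(x_i−x_{i−1})]`, `a = 1/N`. -/
noncomputable def Fvel (N : ℕ) (L : ℝ) (c : ℤ → ℝ) (i : ℤ) : ℝ :=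
  (N:ℝ) * ((fchem N L c (i + 1) - fchem N L c i) / (c (i + 1) - c i)
    - (fchem N L c i - fchem N L c (i - 1)) / (c i - c (i - 1)))

/-! ### Global solutions of bounded Lipschitz ODEs -/

theorem ode_global {V : Type*} [NormedAddCommGroup V] [NormedSpace ℝ V] [CompleteSpace V]
    (v : V → V) (K M : NNReal) (hK : LipschitzWith K v) (hM : ∀ u, ‖v u‖ ≤ M) (u0 : V) :
    ∃ u : ℝ → V, u 0 = u0 ∧ ∀ t, HasDerivAt u (v (u t)) t := by
  have key : ∀ n : ℕ, ∃ α : ℝ → V, α 0 = u0 ∧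
      ∀ t ∈ Set.Ioo (-((n:ℝ)+1)) ((n:ℝ)+1), HasDerivAt α (v (α t)) t := by
    intro n
    have hpos : (0:ℝ) < (n:ℝ) + 1 := by positivity
    let t₀ : Set.Icc (-((n:ℝ)+1)) ((n:ℝ)+1) := ⟨0, by constructor <;> linarith⟩
    have hPL : IsPicardLindelof (fun _ ↦ v) t₀ u0 (M * ((n:NNReal)+1)) 0 M K := by
      apply IsPicardLindelof.of_time_independent
      · intro x _; exact hM x
      · exact hK.lipschitzOnWith
      · simp [t₀]
    obtain ⟨α, h0, h⟩ := hPL.exists_eq_forall_mem_Icc_hasDerivWithinAt₀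
    refine ⟨α, h0, fun t ht => ?_⟩
    exact (h t ⟨ht.1.le, ht.2.le⟩).hasDerivAt (Icc_mem_nhds ht.1 ht.2)
  choose α h0 h using key
  have huniq : ∀ n m : ℕ, n ≤ m → Set.EqOn (α n) (α m) (Set.Ioo (-((n:ℝ)+1)) ((n:ℝ)+1)) := by
    intro n m hnm
    have hnm' : (n:ℝ) ≤ m := by exact_mod_cast hnm
    have hpos : (0:ℝ) < (n:ℝ) + 1 := by positivity
    apply ODE_solution_unique_of_mem_Ioo (v := fun _ => v) (s := fun _ => Set.univ) (K := K)
      (t₀ := 0)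
    · intro t _; exact hK.lipschitzOnWith
    · constructor <;> linarith
    · intro t ht; exact ⟨h n t ht, trivial⟩
    · intro t ht; exact ⟨h m t ⟨by linarith [ht.1], by linarith [ht.2]⟩, trivial⟩
    · rw [h0, h0]
  have hmem : ∀ (t : ℝ) (n : ℕ), ⌈|t|⌉₊ ≤ n → t ∈ Set.Ioo (-((n:ℝ)+1)) ((n:ℝ)+1) := by
    intro t n hn
    have h1 : |t| ≤ n := (Nat.le_ceil _).trans (by exact_mod_cast hn)
    have := abs_le.1 h1
    constructor <;> linarith
  refine ⟨fun t => α ⌈|t|⌉₊ t, by simp [h0], fun t => ?_⟩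
  have hev : (fun s => α ⌈|s|⌉₊ s) =ᶠ[𝓝 t] α (⌈|t|⌉₊ + 1) := by
    have : ∀ᶠ s in 𝓝 t, |s| < |t| + 1 :=
      (continuous_abs.tendsto t).eventually (gt_mem_nhds (by linarith))
    filter_upwards [this] with s hs
    apply huniq
    · rw [Nat.ceil_le]
      have := Nat.le_ceil |t|
      push_cast
      linarith
    · exact hmem s _ le_rfl
  have h2 : α ⌈|t|⌉₊ t = α (⌈|t|⌉₊ + 1) t := hev.self_of_nhds
  have h3 := h (⌈|t|⌉₊ + 1) t (hmem t _ (Nat.le_succ _))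
  show HasDerivAt _ (v (α ⌈|t|⌉₊ t)) t
  rw [h2]
  exact h3.congr_of_eventuallyEq hev

/-! ### Bounded Lipschitz functions -/

/-- bounded Lipschitz real functions -/
def BL {V : Type*} [PseudoMetricSpace V] (F : V → ℝ) : Prop :=
  ∃ C : ℝ, 0 ≤ C ∧ (∀ u v, |F u - F v| ≤ C * dist u v) ∧ ∀ u, |F u| ≤ C

section
variable {V : Type*} [PseudoMetricSpace V] {F G : V → ℝ}

theorem BL.const (c : ℝ) : BL (fun _ : V => c) :=
  ⟨|c|, abs_nonneg _, fun u v => by simp; positivity, fun _ => le_rfl⟩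

theorem BL.add (hF : BL F) (hG : BL G) : BL (fun u => F u + G u) := by
  obtain ⟨C, hC, h1, h2⟩ := hF
  obtain ⟨D, hD, h3, h4⟩ := hG
  refine ⟨C + D, by positivity, fun u v => ?_, fun u => ?_⟩
  · have : F u + G u - (F v + G v) = (F u - F v) + (G u - G v) := by ring
    rw [this]
    refine (abs_add_le _ _).trans ?_
    linarith [h1 u v, h3 u v]
  · exact (abs_add_le _ _).trans (add_le_add (h2 u) (h4 u))

theorem BL.mul (hF : BL F) (hG : BL G) : BL (fun u => F u * G u) := by
  obtain ⟨C, hC, h1, h2⟩ := hF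
  obtain ⟨D, hD, h3, h4⟩ := hG
  refine ⟨2 * C * D, by positivity, fun u v => ?_, fun u => ?_⟩
  · have : F u * G u - F v * G v = F u * (G u - G v) + (F u - F v) * G v := by ring
    rw [this]
    refine (abs_add_le _ _).trans ?_
    rw [abs_mul, abs_mul]
    have a1 := mul_le_mul (h2 u) (h3 u v) (abs_nonneg _) hC
    have a2 := mul_le_mul (h1 u v) (h4 v) (abs_nonneg _) (by positivity)
    nlinarith
  · rw [abs_mul]
    have := mul_le_mul (h2 u) (h4 u) (abs_nonneg _) hC
    nlinarith [mul_nonneg hC hD]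

theorem BL.neg (hF : BL F) : BL (fun u => - F u) := by
  simpa using (BL.const (V := V) (-1)).mul hF

theorem BL.sub (hF : BL F) (hG : BL G) : BL (fun u => F u - G u) := by
  simpa [sub_eq_add_neg] using hF.add hG.neg

theorem BL.pow (hF : BL F) (n : ℕ) : BL (fun u => F u ^ n) := by
  induction n with
  | zero => simpa using BL.const (V := V) 1
  | succ n ih => simpa [pow_succ] using ih.mul hF

theorem BL.sum {ι : Type*} (s : Finset ι) (f : ι → V → ℝ) (h : ∀ i ∈ s, BL (f i)) :
    BL (fun u => ∑ i ∈ s, f i u) := by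
  classical
  induction s using Finset.induction_on with
  | empty => simpa using BL.const (V := V) 0
  | insert a s ha ih =>
    simp only [Finset.sum_insert ha]
    exact (h a (by simp)).add (ih fun i hi => h i (by simp [hi]))

theorem BL.inv (hF : BL F) (d : ℝ) (hd : 0 < d) (h : ∀ u, d ≤ F u) : BL (fun u => (F u)⁻¹) := by
  obtain ⟨C, hC, h1, h2⟩ := hF
  refine ⟨C * (d⁻¹ * d⁻¹) + d⁻¹, by positivity, fun u v => ?_, fun u => ?_⟩
  · have hu := h u
    have hv := h v
    have pu : 0 < F u := by linarith
    have pv : 0 < F v := by linarith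
    have : (F u)⁻¹ - (F v)⁻¹ = (F v - F u) * ((F u)⁻¹ * (F v)⁻¹) := by field_simp
    rw [this, abs_mul, abs_of_pos (a := (F u)⁻¹ * (F v)⁻¹) (by positivity)]
    have e1 : (F u)⁻¹ ≤ d⁻¹ := inv_anti₀ hd hu
    have e2 : (F v)⁻¹ ≤ d⁻¹ := inv_anti₀ hd hv
    have e3 : (F u)⁻¹ * (F v)⁻¹ ≤ d⁻¹ * d⁻¹ := mul_le_mul e1 e2 (by positivity) (by positivity)
    have e4 := mul_le_mul (h1 v u) e3 (by positivity) (by positivity)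
    rw [dist_comm v u] at e4
    have : 0 ≤ d⁻¹ * dist u v := by positivity
    nlinarith
  · have hu := h u
    have pu : 0 < F u := by linarith
    rw [abs_of_pos (by positivity)]
    have e1 : (F u)⁻¹ ≤ d⁻¹ := inv_anti₀ hd hu
    have : 0 ≤ C * (d⁻¹ * d⁻¹) := by positivity
    linarith

theorem BL.comp (hF : BL F) (φ : ℝ → ℝ) (h1 : ∀ x y, |φ x - φ y| ≤ |x - y|)
    (h2 : ∀ x, |φ x| ≤ 1) : BL (fun u => φ (F u)) := by
  obtain ⟨C, hC, h3, h4⟩ := hF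
  refine ⟨C + 1, by positivity, fun u v => ?_, fun u => ?_⟩
  · have := (h1 (F u) (F v)).trans (h3 u v)
    have : 0 ≤ dist u v := dist_nonneg
    linarith
  · linarith [h2 (F u)]
end

/-- clamp to `[δ, L-δ]` -/
noncomputable def clampT (δ L d : ℝ) : ℝ := max δ (min d (L - δ))

theorem clampT_mem {δ L : ℝ} (hδ : 2 * δ ≤ L) (d : ℝ) :
    δ ≤ clampT δ L d ∧ clampT δ L d ≤ L - δ := by
  unfold clampT
  exact ⟨le_max_left _ _, max_le (by linarith) (min_le_right _ _)⟩

theorem clampT_eq {δ L d : ℝ} (h1 : δ ≤ d) (h2 : d ≤ L - δ) : clampT δ L d = d := by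
  unfold clampT
  rw [min_eq_left h2, max_eq_right h1]

theorem clampT_lip (δ L x y : ℝ) : |clampT δ L x - clampT δ L y| ≤ |x - y| := by
  unfold clampT
  have h1 := abs_max_sub_max_le_max δ (min x (L-δ)) δ (min y (L-δ))
  have h2 := abs_min_sub_min_le_max x (L-δ) y (L-δ)
  rw [sub_self, abs_zero, max_eq_right (a := (0:ℝ)) (abs_nonneg _)] at h1
  rw [sub_self, abs_zero, max_eq_left (b := (0:ℝ)) (abs_nonneg _)] at h2
  exact h1.trans h2

theorem sin_lower {δ L d : ℝ} (hL : 0 < L) (hδ : 0 < δ) (h1 : δ ≤ d) (h2 : d ≤ L - δ) :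
    2 * δ / L ≤ Real.sin (π * d / L) := by
  have hp := Real.pi_pos
  have hd : 0 < d := hδ.trans_le h1
  rcases le_total d (L/2) with h | h
  · have := Real.mul_le_sin (x := π * d / L) (by positivity) (by
      rw [div_le_iff₀ hL]; nlinarith)
    refine le_trans ?_ this
    have e : 2 / π * (π * d / L) = 2 * d / L := by field_simp
    rw [e]; gcongr
  · have := Real.mul_le_sin (x := π * (L - d) / L) (by
      have : 0 ≤ L - d := by linarith
      positivity) (by
      rw [div_le_iff₀ hL]; nlinarith)
    have e1 : π * (L - d) / L = π - π * d / L := by field_simp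
    have e : 2 / π * (π * (L - d) / L) = 2 * (L - d) / L := by field_simp
    rw [e, e1, Real.sin_pi_sub] at this
    refine le_trans ?_ this
    gcongr; linarith

/-! ### Truncated vector field -/

/-- chemical potential with differences passed through `φ` -/
noncomputable def fG (φ : ℝ → ℝ) (N : ℕ) (L : ℝ) (c : ℤ → ℝ) (i : ℤ) : ℝ :=
  -(2 * π * (N:ℝ)⁻¹ / L ^ 2) *
      (∑ j ∈ Finset.Ico (i + 1) (i + (N:ℤ)), Real.cot (π * φ (c j - c i) / L))
    + (1 / φ (c (i + 1) - c i) - 1 / φ (c i - c (i - 1)))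
    + ((N:ℝ)⁻¹ ^ 2 / φ (c (i + 1) - c i) ^ 3 - (N:ℝ)⁻¹ ^ 2 / φ (c i - c (i - 1)) ^ 3)

/-- velocity with differences passed through `φ` -/
noncomputable def FG (φ : ℝ → ℝ) (N : ℕ) (L : ℝ) (c : ℤ → ℝ) (i : ℤ) : ℝ :=
  (N:ℝ) * ((fG φ N L c (i + 1) - fG φ N L c i) / φ (c (i + 1) - c i)
    - (fG φ N L c i - fG φ N L c (i - 1)) / φ (c i - c (i - 1)))

theorem FG_id (N : ℕ) (L : ℝ) (c : ℤ → ℝ) (i : ℤ) : FG id N L c i = Fvel N L c i := rfl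

theorem sum_window (N : ℕ) (i : ℤ) (F : ℤ → ℝ) :
    ∑ j ∈ Finset.Ico (i + 1) (i + (N:ℤ)), F j = ∑ k ∈ Finset.Ico 1 N, F (i + (k:ℤ)) := by
  symm
  refine Finset.sum_nbij' (fun k : ℕ => i + (k:ℤ)) (fun j : ℤ => (j - i).toNat) ?_ ?_ ?_ ?_ ?_
  · intro k hk; simp at hk ⊢; omega
  · intro k hk; simp at hk ⊢; omega
  · intro k hk; simp
  · intro k hk; simp at hk ⊢; omega
  · intro k hk; rfl

theorem fG_per (φ : ℝ → ℝ) (N : ℕ) (L : ℝ) (c : ℤ → ℝ) (hc : ∀ i : ℤ, c (i + (N:ℤ)) = c i + L)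
    (i : ℤ) : fG φ N L c (i + (N:ℤ)) = fG φ N L c i := by
  unfold fG
  rw [sum_window, sum_window]
  have e1 : c (i + N + 1) = c (i + 1) + L := by rw [← hc]; congr 1; ring
  have e2 : c (i + N - 1) = c (i - 1) + L := by rw [← hc]; congr 1; ring
  have e3 : ∀ k : ℕ, c (i + N + k) = c (i + k) + L := by
    intro k; rw [← hc]; congr 1; ring
  simp only [e1, e2, e3, hc, add_sub_add_right_eq_sub]

theorem FG_per (φ : ℝ → ℝ) (N : ℕ) (L : ℝ) (c : ℤ → ℝ) (hc : ∀ i : ℤ, c (i + (N:ℤ)) = c i + L)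
    (i : ℤ) : FG φ N L c (i + (N:ℤ)) = FG φ N L c i := by
  unfold FG
  have e1 : c (i + N + 1) = c (i + 1) + L := by rw [← hc]; congr 1; ring
  have e2 : c (i + N - 1) = c (i - 1) + L := by rw [← hc]; congr 1; ring
  have e3 : fG φ N L c (i + N + 1) = fG φ N L c (i + 1) := by
    rw [← fG_per φ N L c hc (i + 1)]; congr 1; ring
  have e4 : fG φ N L c (i + N - 1) = fG φ N L c (i - 1) := by
    rw [← fG_per φ N L c hc (i - 1)]; congr 1; ring
  simp only [e1, e2, e3, e4, hc, fG_per φ N L c hc, add_sub_add_right_eq_sub]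

theorem fG_congr (φ ψ : ℝ → ℝ) (N : ℕ) (hN : 2 ≤ N) (L : ℝ) (c : ℤ → ℝ)
    (h : ∀ (i : ℤ), ∀ k ∈ Finset.Ico 1 N, φ (c (i + (k:ℤ)) - c i) = ψ (c (i + (k:ℤ)) - c i))
    (i : ℤ) : fG φ N L c i = fG ψ N L c i := by
  unfold fG
  rw [sum_window, sum_window]
  have e1 : φ (c (i + 1) - c i) = ψ (c (i + 1) - c i) := by
    simpa using h i 1 (by simp; omega)
  have e2 : φ (c i - c (i - 1)) = ψ (c i - c (i - 1)) := by
    simpa using h (i - 1) 1 (by simp; omega)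
  rw [e1, e2, Finset.sum_congr rfl fun k hk => by rw [h i k hk]]

theorem FG_congr (φ ψ : ℝ → ℝ) (N : ℕ) (hN : 2 ≤ N) (L : ℝ) (c : ℤ → ℝ)
    (h : ∀ (i : ℤ), ∀ k ∈ Finset.Ico 1 N, φ (c (i + (k:ℤ)) - c i) = ψ (c (i + (k:ℤ)) - c i))
    (i : ℤ) : FG φ N L c i = FG ψ N L c i := by
  unfold FG
  have e1 : φ (c (i + 1) - c i) = ψ (c (i + 1) - c i) := by
    simpa using h i 1 (by simp; omega)
  have e2 : φ (c i - c (i - 1)) = ψ (c i - c (i - 1)) := by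
    simpa using h (i - 1) 1 (by simp; omega)
  simp only [e1, e2, fG_congr φ ψ N hN L c h]

/-- displaced configuration -/
def liftX (N : ℕ) (x0 : ℤ → ℝ) (u : ZMod N → ℝ) (i : ℤ) : ℝ := x0 i + u (i : ZMod N)

theorem liftX_per (N : ℕ) (L : ℝ) (x0 : ℤ → ℝ) (hper0 : ∀ i : ℤ, x0 (i + (N:ℤ)) = x0 i + L)
    (u : ZMod N → ℝ) (i : ℤ) : liftX N x0 u (i + (N:ℤ)) = liftX N x0 u i + L := by
  unfold liftX
  rw [hper0]
  push_cast
  rw [ZMod.natCast_self, add_zero]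
  ring

theorem sin_lip (x y : ℝ) : |Real.sin x - Real.sin y| ≤ |x - y| := by
  have := Convex.norm_image_sub_le_of_norm_deriv_le (f := Real.sin) (C := 1) (s := Set.univ)
    (x := y) (y := x) (fun x _ => Real.differentiableAt_sin)
    (fun x _ => by simpa using Real.abs_cos_le_one x) convex_univ trivial trivial
  simpa using this

theorem cos_lip (x y : ℝ) : |Real.cos x - Real.cos y| ≤ |x - y| := by
  have := Convex.norm_image_sub_le_of_norm_deriv_le (f := Real.cos) (C := 1) (s := Set.univ)
    (x := y) (y := x) (fun x _ => Real.differentiableAt_cos)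
    (fun x _ => by simpa using Real.abs_sin_le_one x) convex_univ trivial trivial
  simpa using this

theorem per_cast (N : ℕ) {p : ℤ → ℝ} (hp : ∀ i : ℤ, p (i + (N:ℤ)) = p i) (i j : ℤ)
    (h : (i : ZMod N) = (j : ZMod N)) : p i = p j := by
  have h' := (ZMod.intCast_eq_intCast_iff_dvd_sub i j N).1 h
  obtain ⟨k, hk⟩ := h'
  have : j = i + k * N := by linarith
  rw [this]
  have : Function.Periodic p (N:ℤ) := hp
  exact (this.int_mul k i).symm

section
variable (N : ℕ) [NeZero N] (L δ : ℝ) (x0 : ℤ → ℝ)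

theorem BL_clamp (hδ : 0 < δ) (hδL : 2 * δ ≤ L) (i j : ℤ) :
    BL (fun u : ZMod N → ℝ => clampT δ L (liftX N x0 u j - liftX N x0 u i)) := by
  refine ⟨2 + L, by linarith, fun u v => ?_, fun u => ?_⟩
  · refine (clampT_lip _ _ _ _).trans ?_
    unfold liftX
    have h1 := dist_le_pi_dist u v (i : ZMod N)
    have h2 := dist_le_pi_dist u v (j : ZMod N)
    rw [Real.dist_eq] at h1 h2
    have h3 : 0 ≤ dist u v := dist_nonneg
    have h4 : 0 ≤ L * dist u v := mul_nonneg (by linarith) h3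
    rw [abs_le] at *
    constructor <;> nlinarith
  · have := clampT_mem hδL (liftX N x0 u j - liftX N x0 u i)
    rw [abs_le]; constructor <;> linarith

theorem BL_cot (hδ : 0 < δ) (hδL : 2 * δ ≤ L) (i j : ℤ) :
    BL (fun u : ZMod N → ℝ =>
      Real.cot (π * clampT δ L (liftX N x0 u j - liftX N x0 u i) / L)) := by
  have hL : 0 < L := by linarith
  have h0 : BL (fun u : ZMod N → ℝ => π * clampT δ L (liftX N x0 u j - liftX N x0 u i) / L) := by
    simp only [div_eq_mul_inv]
    exact ((BL.const π).mul (BL_clamp N L δ x0 hδ hδL i j)).mul (BL.const _)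
  have h1 := h0.comp Real.sin sin_lip Real.abs_sin_le_one
  have h2 := h0.comp Real.cos cos_lip Real.abs_cos_le_one
  have h3 := h1.inv (2 * δ / L) (by positivity) (fun u => by
    have := clampT_mem hδL (liftX N x0 u j - liftX N x0 u i)
    exact sin_lower hL hδ this.1 this.2)
  simp only [Real.cot_eq_cos_div_sin, div_eq_mul_inv] at h2 h3 ⊢
  exact h2.mul h3

theorem BL_inv (hδ : 0 < δ) (hδL : 2 * δ ≤ L) (i j : ℤ) :
    BL (fun u : ZMod N → ℝ => (clampT δ L (liftX N x0 u j - liftX N x0 u i))⁻¹) :=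
  (BL_clamp N L δ x0 hδ hδL i j).inv δ hδ fun _ => (clampT_mem hδL _).1

theorem BL_fG (hδ : 0 < δ) (hδL : 2 * δ ≤ L) (i : ℤ) :
    BL (fun u : ZMod N → ℝ => fG (clampT δ L) N L (liftX N x0 u) i) := by
  unfold fG
  simp only [div_eq_mul_inv (1:ℝ), div_eq_mul_inv ((N:ℝ)⁻¹ ^ 2), ← inv_pow]
  have b := BL_inv N L δ x0 hδ hδL
  refine (((BL.const _).mul (BL.sum _ _ fun j _ => BL_cot N L δ x0 hδ hδL i j)).add ?_).add ?_
  · exact ((BL.const _).mul (b _ _)).sub ((BL.const _).mul (b _ _))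
  · exact ((BL.const _).mul ((b _ _).pow 3)).sub ((BL.const _).mul ((b _ _).pow 3))

theorem BL_FG (hδ : 0 < δ) (hδL : 2 * δ ≤ L) (i : ℤ) :
    BL (fun u : ZMod N → ℝ => FG (clampT δ L) N L (liftX N x0 u) i) := by
  unfold FG
  simp only [div_eq_mul_inv]
  have b := BL_inv N L δ x0 hδ hδL
  have f := BL_fG N L δ x0 hδ hδL
  exact (BL.const _).mul ((((f _).sub (f _)).mul (b _ _)).sub (((f _).sub (f _)).mul (b _ _)))

theorem trunc_sol (hδ : 0 < δ) (hδL : 2 * δ ≤ L)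
    (hper0 : ∀ i : ℤ, x0 (i + (N:ℤ)) = x0 i + L) :
    ∃ x : ℝ → ℤ → ℝ, (∀ i, x 0 i = x0 i) ∧ (∀ t, ∀ i : ℤ, x t (i + (N:ℤ)) = x t i + L) ∧
      ∀ t i, HasDerivAt (fun s => x s i) (FG (clampT δ L) N L (x t) i) t := by
  let v : (ZMod N → ℝ) → (ZMod N → ℝ) := fun u k =>
    FG (clampT δ L) N L (liftX N x0 u) (k.val : ℤ)
  have hb := fun k : ZMod N => BL_FG N L δ x0 hδ hδL (k.val : ℤ)
  choose C hC h1 h2 using hb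
  have hS : ∀ k, C k ≤ ∑ k, C k := fun k =>
    Finset.single_le_sum (fun k _ => hC k) (Finset.mem_univ k)
  have hS0 : 0 ≤ ∑ k, C k := Finset.sum_nonneg fun k _ => hC k
  obtain ⟨u, hu0, hu⟩ := ode_global v ⟨_, hS0⟩ ⟨_, hS0⟩ (by
      refine LipschitzWith.of_dist_le_mul fun a b => ?_
      rw [dist_pi_le_iff (by positivity)]
      intro k
      rw [Real.dist_eq]
      refine (h1 k a b).trans ?_
      exact mul_le_mul_of_nonneg_right (hS k) dist_nonneg) (by
      intro a
      rw [pi_norm_le_iff_of_nonneg (by positivity)]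
      intro k
      exact (h2 k a).trans (hS k)) 0
  refine ⟨fun t => liftX N x0 (u t), ?_, ?_, ?_⟩
  · intro i; simp [liftX, hu0]
  · intro t i; exact liftX_per N L x0 hper0 _ i
  · intro t i
    have h3 := (hasDerivAt_pi.1 (hu t) (i : ZMod N)).const_add (x0 i)
    have h4 : v (u t) (i : ZMod N) = FG (clampT δ L) N L (liftX N x0 (u t)) i := by
      apply per_cast N (FG_per _ N L _ (liftX_per N L x0 hper0 _))
      simp
    rw [h4] at h3
    exact h3
end

/-! ### Energy -/

/-- the energy of a configuration -/
noncomputable def Eng (N : ℕ) (L : ℝ) (c : ℤ → ℝ) : ℝ :=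
  (N:ℝ)⁻¹ / L * (∑ i ∈ Finset.range N, ∑ k ∈ Finset.Ico 1 N,
      Real.log (Real.sin (π * (c ((i:ℤ) + (k:ℤ)) - c (i:ℤ)) / L)))
    + ∑ i ∈ Finset.range N, (- Real.log (c ((i:ℤ) + 1) - c (i:ℤ))
        + (N:ℝ)⁻¹ ^ 2 / 2 * ((c ((i:ℤ) + 1) - c (i:ℤ))⁻¹) ^ 2)

theorem sum_shift1 (N : ℕ) (p : ℤ → ℝ) (hp : ∀ i : ℤ, p (i + (N:ℤ)) = p i) :
    ∑ i ∈ Finset.range N, p ((i:ℤ) + 1) = ∑ i ∈ Finset.range N, p (i:ℤ) := by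
  have h1 := Finset.sum_range_succ (fun i : ℕ => p (i:ℤ)) N
  have h2 := Finset.sum_range_succ' (fun i : ℕ => p (i:ℤ)) N
  have h3 := hp 0
  push_cast at h1 h2
  rw [zero_add] at h3
  linarith

theorem sum_shift (N : ℕ) (p : ℤ → ℝ) (hp : ∀ i : ℤ, p (i + (N:ℤ)) = p i) (k : ℕ) :
    ∑ i ∈ Finset.range N, p ((i:ℤ) + (k:ℤ)) = ∑ i ∈ Finset.range N, p (i:ℤ) := by
  induction k with
  | zero => simp
  | succ k ih =>
    rw [← ih, ← sum_shift1 N (fun i => p (i + (k:ℤ)))]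
    · refine Finset.sum_congr rfl fun i _ => ?_
      push_cast
      congr 1; ring
    · intro i
      rw [← hp (i + k)]; congr 1; ring

theorem sum_diff (N : ℕ) (q v : ℤ → ℝ) (hq : ∀ i : ℤ, q (i + (N:ℤ)) = q i)
    (hv : ∀ i : ℤ, v (i + (N:ℤ)) = v i) :
    ∑ i ∈ Finset.range N, q (i:ℤ) * (v ((i:ℤ) + 1) - v (i:ℤ))
      = ∑ i ∈ Finset.range N, (q ((i:ℤ) - 1) - q (i:ℤ)) * v (i:ℤ) := by
  have := sum_shift1 N (fun i => q (i - 1) * v i) (by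
    intro i
    have e : q (i + N - 1) = q (i - 1) := by rw [← hq (i - 1)]; congr 1; ring
    simp only [e, hv])
  simp only [add_sub_cancel_right] at this
  simp only [mul_sub, sub_mul, Finset.sum_sub_distrib, this]

theorem cot_pi_sub' (x : ℝ) : Real.cot (π - x) = - Real.cot x := by
  rw [Real.cot_eq_cos_div_sin, Real.cot_eq_cos_div_sin, Real.cos_pi_sub, Real.sin_pi_sub, neg_div]

theorem sum_cot (N : ℕ) (L : ℝ) (hL : 0 < L) (c v : ℤ → ℝ)
    (hc : ∀ i : ℤ, c (i + (N:ℤ)) = c i + L) (hv : ∀ i : ℤ, v (i + (N:ℤ)) = v i) :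
    ∑ i ∈ Finset.range N, ∑ k ∈ Finset.Ico 1 N,
        Real.cot (π * (c ((i:ℤ) + (k:ℤ)) - c (i:ℤ)) / L) * (v ((i:ℤ) + (k:ℤ)) - v (i:ℤ))
      = -2 * ∑ i ∈ Finset.range N, (∑ k ∈ Finset.Ico 1 N,
        Real.cot (π * (c ((i:ℤ) + (k:ℤ)) - c (i:ℤ)) / L)) * v (i:ℤ) := by
  have h1 : ∑ i ∈ Finset.range N, ∑ k ∈ Finset.Ico 1 N,
        Real.cot (π * (c ((i:ℤ) + (k:ℤ)) - c (i:ℤ)) / L) * v ((i:ℤ) + (k:ℤ))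
      = - ∑ i ∈ Finset.range N, ∑ k ∈ Finset.Ico 1 N,
        Real.cot (π * (c ((i:ℤ) + (k:ℤ)) - c (i:ℤ)) / L) * v (i:ℤ) := by
    have h2 : ∀ k : ℕ, ∑ i ∈ Finset.range N,
        Real.cot (π * (c ((i:ℤ) + (k:ℤ)) - c (i:ℤ)) / L) * v ((i:ℤ) + (k:ℤ))
        = ∑ i ∈ Finset.range N, Real.cot (π * (c (i:ℤ) - c ((i:ℤ) - (k:ℤ))) / L) * v (i:ℤ) := by
      intro k
      rw [← sum_shift N (fun i => Real.cot (π * (c i - c (i - (k:ℤ))) / L) * v i) _ k]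
      · simp only [add_sub_cancel_right]
      · intro i
        have e : c (i + N - k) = c (i - k) + L := by rw [← hc]; congr 1; ring
        simp only [hc, hv, e, add_sub_add_right_eq_sub]
    rw [Finset.sum_comm, Finset.sum_congr rfl fun k _ => h2 k, Finset.sum_comm,
      ← Finset.sum_neg_distrib]
    refine Finset.sum_congr rfl fun i _ => ?_
    rw [← Finset.sum_neg_distrib]
    refine Finset.sum_nbij' (fun k => N - k) (fun k => N - k) ?_ ?_ ?_ ?_ ?_
    · intro k hk; simp at hk ⊢; omega
    · intro k hk; simp at hk ⊢; omega
    · intro k hk; simp at hk ⊢; omega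
    · intro k hk; simp at hk ⊢; omega
    · intro k hk
      simp at hk
      have e : c ((i:ℤ) + ((N - k : ℕ) : ℤ)) = c ((i:ℤ) - k) + L := by
        rw [← hc]; congr 1; omega
      rw [e, ← neg_mul, ← cot_pi_sub']
      congr 2
      field_simp
      ring
  have h3 : ∀ i k : ℕ, Real.cot (π * (c ((i:ℤ) + (k:ℤ)) - c (i:ℤ)) / L)
      * (v ((i:ℤ) + (k:ℤ)) - v (i:ℤ))
      = Real.cot (π * (c ((i:ℤ) + (k:ℤ)) - c (i:ℤ)) / L) * v ((i:ℤ) + (k:ℤ))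
        - Real.cot (π * (c ((i:ℤ) + (k:ℤ)) - c (i:ℤ)) / L) * v (i:ℤ) :=
    fun i k => mul_sub _ _ _
  simp only [h3, Finset.sum_sub_distrib, h1, Finset.sum_mul]
  ring

theorem fchem_eq (N : ℕ) (L : ℝ) (c : ℤ → ℝ) (i : ℤ) : fchem N L c i = 
  -(2 * π * (N:ℝ)⁻¹ / L ^ 2) *
      (∑ k ∈ Finset.Ico 1 N, Real.cot (π * (c (i + (k:ℤ)) - c i) / L))
    + (1 / (c (i + 1) - c i) - 1 / (c i - c (i - 1)))
    + ((N:ℝ)⁻¹ ^ 2 / (c (i + 1) - c i) ^ 3 - (N:ℝ)⁻¹ ^ 2 / (c i - c (i - 1)) ^ 3) := by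
  unfold fchem
  rw [sum_window]

theorem mono_k (c : ℤ → ℝ) (δ : ℝ) (hδ : 0 ≤ δ) (h : ∀ i, δ ≤ c (i + 1) - c i) (i : ℤ) (k : ℕ)
    (hk : 1 ≤ k) : δ ≤ c (i + (k:ℤ)) - c i := by
  induction k, hk using Nat.le_induction with
  | base => simpa using h i
  | succ k hk ih =>
    have := h (i + k)
    have e : i + ((k + 1 : ℕ) : ℤ) = i + k + 1 := by push_cast; ring
    rw [e]; linarith

theorem diff_mem (N : ℕ) (L : ℝ) (c : ℤ → ℝ) (hc : ∀ i : ℤ, c (i + (N:ℤ)) = c i + L)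
    (δ : ℝ) (hδ : 0 ≤ δ) (h : ∀ i, δ ≤ c (i + 1) - c i) (i : ℤ) (k : ℕ)
    (hk : k ∈ Finset.Ico 1 N) : δ ≤ c (i + (k:ℤ)) - c i ∧ c (i + (k:ℤ)) - c i ≤ L - δ := by
  simp at hk
  refine ⟨mono_k c δ hδ h i k hk.1, ?_⟩
  have h1 := mono_k c δ hδ h (i + k) (N - k) (by omega)
  have e : i + (k:ℤ) + ((N - k : ℕ) : ℤ) = i + N := by omega
  rw [e, hc] at h1
  linarith

theorem energy_deriv (N : ℕ) (hN : 2 ≤ N) (L : ℝ) (hL : 0 < L) (x : ℝ → ℤ → ℝ) (t : ℝ)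
    (hc : ∀ i : ℤ, x t (i + (N:ℤ)) = x t i + L) (δ : ℝ) (hδ : 0 < δ)
    (hg : ∀ i, δ ≤ x t (i + 1) - x t i)
    (hx : ∀ i, HasDerivAt (fun s => x s i) (Fvel N L (x t) i) t) :
    ∃ D : ℝ, D ≤ 0 ∧ HasDerivAt (fun s => Eng N L (x s)) D t := by
  set c := x t with hcdef
  set v := Fvel N L c with hvdef
  have hv : ∀ i : ℤ, v (i + (N:ℤ)) = v i := FG_per id N L c hc
  have hf : ∀ i : ℤ, fchem N L c (i + (N:ℤ)) = fchem N L c i := fG_per id N L c hc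
  have hN0 : (0:ℝ) < N := by positivity
  have hgp : ∀ i, 0 < c (i + 1) - c i := fun i => hδ.trans_le (hg i)
  have c1 : ∀ i : ℤ, c (i + N + 1) = c (i + 1) + L := by
    intro i; rw [← hc]; congr 1; ring
  let q : ℤ → ℝ := fun i => -(1 / (c (i + 1) - c i)) - (N:ℝ)⁻¹ ^ 2 / (c (i + 1) - c i) ^ 3
  have hq : ∀ i : ℤ, q (i + (N:ℤ)) = q i := by
    intro i; simp only [q, c1, hc, add_sub_add_right_eq_sub]
  -- derivative of the interaction terms
  have hd1 : ∀ i ∈ Finset.range N, ∀ k ∈ Finset.Ico 1 N,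
      HasDerivAt (fun s => Real.log (Real.sin (π * (x s ((i:ℤ) + (k:ℤ)) - x s (i:ℤ)) / L)))
        (π / L * (Real.cot (π * (c ((i:ℤ) + (k:ℤ)) - c (i:ℤ)) / L)
          * (v ((i:ℤ) + (k:ℤ)) - v (i:ℤ)))) t := by
    intro i _ k hk
    obtain ⟨m1, m2⟩ := diff_mem N L c hc δ hδ.le hg i k hk
    have hs := sin_lower hL hδ m1 m2
    have hs' : 0 < Real.sin (π * (c ((i:ℤ) + (k:ℤ)) - c (i:ℤ)) / L) :=
      lt_of_lt_of_le (by positivity) hs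
    have h1 := ((((hx ((i:ℤ) + (k:ℤ))).sub (hx (i:ℤ))).const_mul π).div_const L).sin.log hs'.ne'
    refine h1.congr_deriv ?_
    rw [Real.cot_eq_cos_div_sin]
    simp only [Pi.sub_apply, ← hcdef]
    field_simp
  have hd2 : ∀ i ∈ Finset.range N,
      HasDerivAt (fun s => - Real.log (x s ((i:ℤ) + 1) - x s (i:ℤ))
        + (N:ℝ)⁻¹ ^ 2 / 2 * ((x s ((i:ℤ) + 1) - x s (i:ℤ))⁻¹) ^ 2)
        (q i * (v ((i:ℤ) + 1) - v (i:ℤ))) t := by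
    intro i _
    have hp := hgp i
    have h0 := (hx ((i:ℤ) + 1)).sub (hx (i:ℤ))
    have h1 := (h0.log hp.ne').neg.add (((h0.inv hp.ne').pow 2).const_mul ((N:ℝ)⁻¹ ^ 2 / 2))
    refine h1.congr_deriv ?_
    simp only [Pi.sub_apply, Pi.inv_apply, ← hcdef, q]
    generalize c ((i:ℤ) + 1) - c (i:ℤ) = g at hp ⊢
    norm_num
    field_simp
    ring
  have hE := ((HasDerivAt.fun_sum fun i hi => HasDerivAt.fun_sum (hd1 i hi)).const_mul
    ((N:ℝ)⁻¹ / L)).add (HasDerivAt.fun_sum hd2)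
  refine ⟨_, ?_, hE⟩
  have key : (N:ℝ)⁻¹ / L * (∑ i ∈ Finset.range N, ∑ k ∈ Finset.Ico 1 N,
        (π / L * (Real.cot (π * (c ((i:ℤ) + (k:ℤ)) - c (i:ℤ)) / L)
          * (v ((i:ℤ) + (k:ℤ)) - v (i:ℤ)))))
      + ∑ i ∈ Finset.range N, q i * (v ((i:ℤ) + 1) - v (i:ℤ))
      = ∑ i ∈ Finset.range N, fchem N L c i * v i := by
    simp only [← Finset.mul_sum]
    rw [sum_cot N L hL c v hc hv, sum_diff N q v hq hv]
    simp only [Finset.mul_sum, ← Finset.sum_add_distrib]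
    refine Finset.sum_congr rfl fun i _ => ?_
    rw [fchem_eq]
    simp only [q, sub_add_cancel]
    ring
  rw [key]
  let w : ℤ → ℝ := fun i => (fchem N L c i - fchem N L c (i - 1)) / (c i - c (i - 1))
  have hw : ∀ i : ℤ, w (i + (N:ℤ)) = w i := by
    intro i
    have c2 : c (i + N - 1) = c (i - 1) + L := by rw [← hc]; congr 1; ring
    have f2 : fchem N L c (i + N - 1) = fchem N L c (i - 1) := by
      rw [← hf (i - 1)]; congr 1; ring
    simp only [w, c2, f2, hf, hc, add_sub_add_right_eq_sub]
  have hvw : ∀ i, v i = N * (w (i + 1) - w i) := by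
    intro i; simp only [hvdef, Fvel, w, add_sub_cancel_right]
  have h5 := sum_diff N (fchem N L c) w hf hw
  have h6 : ∑ i ∈ Finset.range N, fchem N L c i * v i
      = N * ∑ i ∈ Finset.range N, (fchem N L c ((i:ℤ) - 1) - fchem N L c (i:ℤ)) * w (i:ℤ) := by
    rw [← h5, Finset.mul_sum]
    refine Finset.sum_congr rfl fun i _ => ?_
    rw [hvw]; ring
  rw [h6]
  refine mul_nonpos_of_nonneg_of_nonpos hN0.le (Finset.sum_nonpos fun i _ => ?_)
  have hp := hgp ((i:ℤ) - 1)
  rw [sub_add_cancel] at hp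
  have : (fchem N L c ((i:ℤ) - 1) - fchem N L c (i:ℤ)) * w (i:ℤ)
      = -((fchem N L c (i:ℤ) - fchem N L c ((i:ℤ) - 1)) ^ 2 / (c i - c ((i:ℤ) - 1))) := by
    simp only [w]; ring
  rw [this]
  have : 0 ≤ (fchem N L c (i:ℤ) - fchem N L c ((i:ℤ) - 1)) ^ 2 / (c i - c ((i:ℤ) - 1)) := by
    positivity
  linarith

theorem energy_lower (N : ℕ) (hN : 2 ≤ N) (L : ℝ) (hL : 0 < L) (c : ℤ → ℝ)
    (hc : ∀ i : ℤ, c (i + (N:ℤ)) = c i + L) (δ : ℝ) (hδ : 0 < δ)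
    (hg : ∀ i, δ ≤ c (i + 1) - c i) (i0 : ℕ) (hi0 : i0 ∈ Finset.range N)
    (h0 : c ((i0:ℤ) + 1) - c (i0:ℤ) = δ) :
    (N:ℝ)⁻¹ ^ 2 / 2 * δ⁻¹ ^ 2 - ((N - 1 : ℕ) : ℝ) / 2 * δ⁻¹ - N * L ≤ Eng N L c := by
  have hN0 : (0:ℝ) < N := by positivity
  have hm := diff_mem N L c hc δ hδ.le hg
  have h1 : (N:ℝ) * (((N - 1 : ℕ) : ℝ) * (-(L / 2 * δ⁻¹))) ≤
      ∑ i ∈ Finset.range N, ∑ k ∈ Finset.Ico 1 N,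
      Real.log (Real.sin (π * (c ((i:ℤ) + (k:ℤ)) - c (i:ℤ)) / L)) := by
    have : (N:ℝ) * (((N - 1 : ℕ) : ℝ) * (-(L / 2 * δ⁻¹)))
        = ∑ i ∈ Finset.range N, ∑ k ∈ Finset.Ico 1 N, (-(L / 2 * δ⁻¹)) := by
      simp
    rw [this]
    refine Finset.sum_le_sum fun i _ => Finset.sum_le_sum fun k hk => ?_
    obtain ⟨m1, m2⟩ := hm i k hk
    have hs := sin_lower hL hδ m1 m2
    have hp : 0 < 2 * δ / L := by positivity
    have e1 := Real.log_le_log hp hs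
    have e2 := Real.one_sub_inv_le_log_of_pos hp
    have e3 : (2 * δ / L)⁻¹ = L / 2 * δ⁻¹ := by field_simp
    linarith
  have h2 : (N:ℝ)⁻¹ ^ 2 / 2 * δ⁻¹ ^ 2 - N * L ≤ 
      ∑ i ∈ Finset.range N, (- Real.log (c ((i:ℤ) + 1) - c (i:ℤ))
        + (N:ℝ)⁻¹ ^ 2 / 2 * ((c ((i:ℤ) + 1) - c (i:ℤ))⁻¹) ^ 2) := by
    rw [Finset.sum_add_distrib]
    have a1 : -(N * L) ≤ ∑ i ∈ Finset.range N, (- Real.log (c ((i:ℤ) + 1) - c (i:ℤ))) := by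
      have : -(N * L) = ∑ i ∈ Finset.range N, (-L) := by simp
      rw [this]
      refine Finset.sum_le_sum fun i _ => ?_
      obtain ⟨m1, m2⟩ := hm i 1 (by simp; omega)
      push_cast at m1 m2
      have := Real.log_le_sub_one_of_pos (hδ.trans_le m1)
      linarith
    have a2 := Finset.single_le_sum (s := Finset.range N)
      (f := fun i : ℕ => (N:ℝ)⁻¹ ^ 2 / 2 * ((c ((i:ℤ) + 1) - c (i:ℤ))⁻¹) ^ 2)
      (fun i _ => by positivity) hi0
    simp only [h0] at a2
    linarith
  have h3 := mul_le_mul_of_nonneg_left h1 (show 0 ≤ (N:ℝ)⁻¹ / L by positivity)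
  have h4 : (N:ℝ)⁻¹ / L * ((N:ℝ) * (((N - 1 : ℕ) : ℝ) * (-(L / 2 * δ⁻¹))))
      = - (((N - 1 : ℕ) : ℝ) / 2 * δ⁻¹) := by
    field_simp
  unfold Eng
  linarith

theorem all_of_range (N : ℕ) (hN : 2 ≤ N) (p : ℤ → ℝ) (hp : ∀ i : ℤ, p (i + (N:ℤ)) = p i)
    (P : ℝ → Prop) (h : ∀ i ∈ Finset.range N, P (p (i:ℤ))) (i : ℤ) : P (p i) := by
  have h1 := Int.emod_nonneg i (show (N:ℤ) ≠ 0 by omega)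
  have h2 := Int.emod_lt_of_pos i (show (0:ℤ) < N by omega)
  have h3 : p i = p (i % N) := per_cast N hp _ _ (by simp)
  have h4 : ((i % N).toNat : ℤ) = i % N := Int.toNat_of_nonneg h1
  rw [h3, ← h4]
  apply h
  simp; omega

theorem stays (N : ℕ) (hN : 2 ≤ N) (L : ℝ) (hL : 0 < L) (δ : ℝ) (hδ : 0 < δ) (x : ℝ → ℤ → ℝ)
    (hc : ∀ t, ∀ i : ℤ, x t (i + (N:ℤ)) = x t i + L)
    (hx : ∀ t i, HasDerivAt (fun s => x s i) (FG (clampT δ L) N L (x t) i) t)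
    (h0 : ∀ i, δ < x 0 (i + 1) - x 0 i)
    (hE : Eng N L (x 0) <
      (N:ℝ)⁻¹ ^ 2 / 2 * δ⁻¹ ^ 2 - ((N - 1 : ℕ) : ℝ) / 2 * δ⁻¹ - N * L) :
    ∀ t, 0 ≤ t → ∀ i, δ < x t (i + 1) - x t i := by
  have hper : ∀ t, ∀ i : ℤ, x t (i + (N:ℤ) + 1) - x t (i + (N:ℤ)) = x t (i + 1) - x t i := by
    intro t i
    have : x t (i + N + 1) = x t (i + 1) + L := by rw [← hc]; congr 1; ring
    rw [this, hc]; ring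
  have hcont : ∀ i : ℤ, Continuous fun t => x t (i + 1) - x t i := fun i =>
    (continuous_iff_continuousAt.2 fun t => (hx t (i+1)).continuousAt).sub
      (continuous_iff_continuousAt.2 fun t => (hx t i).continuousAt)
  let S : Set ℝ := Set.Ici 0 ∩ ⋃ i ∈ Finset.range N, {t | x t ((i:ℤ) + 1) - x t (i:ℤ) ≤ δ}
  have hSc : IsClosed S := isClosed_Ici.inter
    (isClosed_biUnion_finset fun i _ => isClosed_le (hcont i) continuous_const)
  have hout : ∀ t, 0 ≤ t → t ∉ S → ∀ i, δ < x t (i + 1) - x t i := by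
    intro t ht hS
    apply all_of_range N hN (fun i => x t (i + 1) - x t i) (hper t) (fun r => δ < r)
    intro i hi
    by_contra hlt
    exact hS ⟨ht, Set.mem_biUnion (by exact hi) (not_lt.1 hlt)⟩
  by_contra hcon
  push Not at hcon
  obtain ⟨t, ht, i, hi⟩ := hcon
  have hSne : S.Nonempty := by
    refine ⟨t, ?_⟩
    by_contra hS
    exact absurd (hout t ht hS i) (not_lt.2 hi)
  have hSb : BddBelow S := ⟨0, fun s hs => hs.1⟩
  have hτ := hSc.csInf_mem hSne hSb
  set τ := sInf S with hτdef
  have hτ0 : 0 ≤ τ := hτ.1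
  obtain ⟨i0, hi0, hle⟩ : ∃ i0 ∈ Finset.range N, x τ ((i0:ℤ) + 1) - x τ (i0:ℤ) ≤ δ := by
    simpa using hτ.2
  have hτpos : 0 < τ := by
    rcases hτ0.eq_or_lt with h | h
    · rw [← h] at hle
      exact absurd (h0 i0) (not_lt.2 hle)
    · exact h
  have hlt : ∀ s, 0 ≤ s → s < τ → ∀ i, δ < x s (i + 1) - x s i := fun s hs hsτ =>
    hout s hs (notMem_of_lt_csInf hsτ hSb)
  have hgτ : ∀ i, δ ≤ x τ (i + 1) - x τ i := by
    intro i
    have ht := ((hcont i).tendsto τ).mono_left (nhdsWithin_le_nhds (s := Set.Iio τ))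
    refine ge_of_tendsto ht ?_
    filter_upwards [Ioo_mem_nhdsLT hτpos] with s hs
    exact (hlt s hs.1.le hs.2 i).le
  have hg : ∀ s ∈ Set.Icc 0 τ, ∀ i, δ ≤ x s (i + 1) - x s i := by
    intro s hs
    rcases hs.2.eq_or_lt with h | h
    · rw [h]; exact hgτ
    · exact fun i => (hlt s hs.1 h i).le
  have hD : ∀ s ∈ Set.Icc 0 τ, ∃ D : ℝ, D ≤ 0 ∧ HasDerivAt (fun s => Eng N L (x s)) D s := by
    intro s hs
    apply energy_deriv N hN L hL x s (hc s) δ hδ (hg s hs)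
    intro i
    rw [← FG_id, ← FG_congr (clampT δ L) id N hN L (x s)]
    · exact hx s i
    · intro i k hk
      obtain ⟨m1, m2⟩ := diff_mem N L (x s) (hc s) δ hδ.le (hg s hs) i k hk
      exact clampT_eq m1 m2
  have hanti : AntitoneOn (fun s => Eng N L (x s)) (Set.Icc 0 τ) := by
    apply antitoneOn_of_deriv_nonpos (convex_Icc 0 τ)
    · intro s hs
      obtain ⟨D, _, h⟩ := hD s hs
      exact h.continuousAt.continuousWithinAt
    · intro s hs
      obtain ⟨D, _, h⟩ := hD s (interior_subset hs)
      exact h.differentiableAt.differentiableWithinAt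
    · intro s hs
      obtain ⟨D, h', h⟩ := hD s (interior_subset hs)
      rw [h.deriv]; exact h'
  have h7 := hanti (Set.left_mem_Icc.2 hτ0) (Set.right_mem_Icc.2 hτ0) hτ0
  have h8 := energy_lower N hN L hL (x τ) (hc τ) δ hδ hgτ i0 hi0 (le_antisymm hle (hgτ i0))
  simp only at h7
  linarith

/-- Global existence for the step-flow ODE system: for any `N ≥ 2`, `L > 0`
and any strictly ordered `L`-periodic initial data, there is a global-in-time `C¹` solution
which stays a step configuration (`x_{i+N} = x_i + L`, `x_i < x_{i+1}`) for all `t ≥ 0`. -/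
theorem stmt_7 (N : ℕ) (hN : 2 ≤ N) (L : ℝ) (hL : 0 < L) (x0 : ℤ → ℝ)
    (hper0 : ∀ i : ℤ, x0 (i + (N:ℤ)) = x0 i + L) (hmono0 : ∀ i : ℤ, x0 i < x0 (i + 1)) :
    ∃ x : ℝ → ℤ → ℝ,
      (∀ i : ℤ, x 0 i = x0 i) ∧
      (∀ t ∈ Set.Ici (0:ℝ), ∀ i : ℤ, x t (i + (N:ℤ)) = x t i + L ∧ x t i < x t (i + 1)) ∧
      (∀ i : ℤ, ∀ t ∈ Set.Ici (0:ℝ),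
        HasDerivWithinAt (fun s => x s i) (Fvel N L (x t) i) (Set.Ici 0) t) := by

  have hNZ : NeZero N := ⟨by omega⟩
  have hN0 : (0:ℝ) < N := by positivity
  -- minimal initial gap
  obtain ⟨m, hm, hmg⟩ : ∃ m : ℝ, 0 < m ∧ ∀ i, m ≤ x0 (i + 1) - x0 i := by
    have hne : (Finset.range N).Nonempty := ⟨0, by simp; omega⟩
    refine ⟨(Finset.range N).inf' hne (fun i : ℕ => x0 ((i:ℤ) + 1) - x0 (i:ℤ)), ?_, ?_⟩
    · rw [Finset.lt_inf'_iff]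
      intro i _
      linarith [hmono0 i]
    · refine all_of_range N hN (fun i => x0 (i + 1) - x0 i) ?_ (fun r => _ ≤ r) ?_
      · intro i
        have : x0 (i + N + 1) = x0 (i + 1) + L := by rw [← hper0]; congr 1; ring
        simp only [this, hper0]; ring
      · intro i hi
        exact Finset.inf'_le (fun i : ℕ => x0 ((i:ℤ) + 1) - x0 (i:ℤ)) hi
  set A : ℝ := (N:ℝ)⁻¹ ^ 2 / 2 with hA
  set B : ℝ := ((N - 1 : ℕ) : ℝ) / 2 with hB
  have hApos : 0 < A := by positivity
  have hBpos : 0 ≤ B := by positivity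
  set D : ℝ := N * L + Eng N L x0 with hDdef
  set s : ℝ := 1 + m⁻¹ + (B + |D| + 1) / A with hs
  have hq : 0 ≤ (B + |D| + 1) / A := by positivity
  have hmi : 0 < m⁻¹ := by positivity
  have hs1 : 1 ≤ s := by linarith
  have hspos : 0 < s := by linarith
  have hsm : m⁻¹ < s := by linarith
  have hsA : B + |D| + 1 ≤ A * s := by
    have : A * ((B + |D| + 1) / A) = B + |D| + 1 := by field_simp
    rw [← this]
    exact mul_le_mul_of_nonneg_left (by linarith) hApos.le
  have hδ : 0 < s⁻¹ := by positivity
  have hδm : s⁻¹ < m := inv_lt_of_inv_lt₀ hm hsm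
  have hδL : 2 * s⁻¹ ≤ L := by
    have := diff_mem N L x0 hper0 m hm.le hmg 0 1 (by simp; omega)
    linarith [this.1, this.2]
  obtain ⟨x, hx0, hxp, hxd⟩ := trunc_sol N L s⁻¹ x0 hδ hδL hper0
  have hx0' : x 0 = x0 := funext hx0
  have hst := stays N hN L hL s⁻¹ hδ x hxp hxd (by
      intro i; rw [hx0']; linarith [hmg i]) (by
      rw [hx0', inv_inv, ← hA, ← hB]
      have h1 : (B + |D| + 1) * s ≤ A * s ^ 2 := by nlinarith
      have h2 : |D| + 1 ≤ (|D| + 1) * s := by nlinarith [abs_nonneg D]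
      have h3 := le_abs_self D
      nlinarith)
  refine ⟨x, hx0, fun t ht i => ⟨hxp t i, ?_⟩, fun i t ht => ?_⟩
  · have := hst t ht i
    linarith
  · have h1 := (hxd t i).hasDerivWithinAt (s := Set.Ici 0)
    rw [← FG_id, ← FG_congr (clampT s⁻¹ L) id N hN L (x t)]
    · exact h1
    · intro i k hk
      obtain ⟨m1, m2⟩ := diff_mem N L (x t) (hxp t) s⁻¹ hδ.le (fun i => (hst t ht i).le) i k hk
      exact clampT_eq m1 m2
end

section
/- Let L > 0, N ∈ ℕ with N ≥ 2, a := 1/N, m₁, m₂ > 0, and let φ : ℝ → ℝ be C⁶ with φ(α+1) = φ(α) − L, φ′(α) ≤ −m₁ < 0, and |φ^{(k)}(α)| ≤ m₂ for all α and 1 ≤ k ≤ 6. Then there is a constant C = C(m₁, m₂, L) such that for every grid index i₀ ∈ {1, …, N−1}, with α* := i₀/N, the principal-value integral PV∫₀¹ (π/L)·cot(π(φ(α*)−φ(β))/L) dβ exists and PV∫₀¹ (π/L)·cot(π(φ(α*)−φ(β))/L) dβ = Σ_{j=0, j≠i₀}^{N−1} a·(π/L)·cot(π(φ(α*)−φ(j/N))/L)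 + (a/2)·φ″(α*)/φ′(α*)² + R, with |R| ≤ C·a⁴. -/
open Real Filter Topology MeasureTheory

noncomputable def JJ (k : ℕ) (f : ℝ → ℝ) (t : ℝ) : ℝ := ∫ s in (0:ℝ)..1, s ^ k * f (s * t)

lemma JJ_cont (k : ℕ) (f : ℝ → ℝ) (hf : Continuous f) : Continuous (JJ k f) := by
  unfold JJ
  apply intervalIntegral.continuous_parametric_intervalIntegral_of_continuous'
  fun_prop

lemma JJ_deriv (k : ℕ) (f : ℝ → ℝ) (hf : ContDiff ℝ 1 f) (t : ℝ) :
    HasDerivAt (JJ k f) (JJ (k+1) (deriv f) t) t := by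
  have hc : Continuous f := hf.continuous
  have hd : Continuous (deriv f) := hf.continuous_deriv le_rfl
  obtain ⟨M, hM⟩ := (isCompact_Icc (a := -(|t|+1)) (b := |t|+1)).exists_bound_of_continuousOn
    hd.continuousOn
  have := intervalIntegral.hasDerivAt_integral_of_dominated_loc_of_deriv_le
    (F := fun x s => s ^ k * f (s * x)) (F' := fun x s => s ^ (k+1) * deriv f (s * x))
    (x₀ := t) (s := Metric.ball t 1) (a := 0) (b := 1) (μ := volume) (bound := fun _ => M)
    (Metric.ball_mem_nhds _ one_pos)
    (Eventually.of_forall fun x => by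
      apply Continuous.aestronglyMeasurable; fun_prop)
    (by apply Continuous.intervalIntegrable; fun_prop)
    (by apply Continuous.aestronglyMeasurable; fun_prop)
    (Eventually.of_forall fun s hs x hx => by
      rw [Set.uIoc_of_le zero_le_one] at hs
      have hx' : |x| ≤ |t| + 1 := by
        have h1 : |x - t| < 1 := by simpa [Real.dist_eq] using hx
        have := abs_sub_abs_le_abs_sub x t
        linarith
      have h2 : |s * x| ≤ |t| + 1 := by
        rw [abs_mul, abs_of_pos hs.1]
        have := abs_nonneg x
        nlinarith [hs.2]
      have h3 := hM (s * x) (by rw [Set.mem_Icc]; exact abs_le.mp h2)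
      rw [norm_mul]
      have h4 : ‖s ^ (k+1)‖ ≤ 1 := by
        rw [norm_pow, Real.norm_eq_abs, abs_of_pos hs.1]
        exact pow_le_one₀ hs.1.le hs.2
      calc _ ≤ 1 * M := mul_le_mul h4 h3 (norm_nonneg _) zero_le_one
        _ = M := one_mul _)
    (by simp)
    (Eventually.of_forall fun s hs x hx => by
      have h1 : HasDerivAt f (deriv f (s * x)) (s * x) :=
        (hf.differentiable (by norm_num)).differentiableAt.hasDerivAt
      have h2 : HasDerivAt (fun x => s * x) s x := by
        simpa using (hasDerivAt_id x).const_mul s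
      have := (h1.comp x h2).const_mul (s ^ k)
      have e : s ^ (k+1) * deriv f (s * x) = s ^ k * (deriv f (s * x) * s) := by ring
      simp only [e]
      exact this)
  exact this.2

lemma JJ_contDiff (n : ℕ) : ∀ (k : ℕ) (f : ℝ → ℝ), ContDiff ℝ n f →
    ContDiff ℝ n (JJ k f) ∧ ∀ j ≤ n, iteratedDeriv j (JJ k f) = JJ (k + j) (iteratedDeriv j f) := by
  induction n with
  | zero =>
    intro k f hf
    refine ⟨?_, ?_⟩
    · have : Continuous f := hf.continuous
      simpa using JJ_cont k f this
    · intro j hj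
      obtain rfl : j = 0 := by omega
      simp
  | succ n ih =>
    intro k f hf
    have h1 : ContDiff ℝ 1 f := hf.of_le (by norm_cast; omega)
    have hd : deriv (JJ k f) = JJ (k+1) (deriv f) := by
      ext t; exact (JJ_deriv k f h1 t).deriv
    have hf' : ContDiff ℝ n (deriv f) := by
      have : ContDiff ℝ ((n:WithTop ℕ∞) + 1) f := by exact_mod_cast hf
      exact (contDiff_succ_iff_deriv.mp this).2.2
    obtain ⟨i1, i2⟩ := ih (k+1) (deriv f) hf'
    refine ⟨?_, ?_⟩
    · have : ContDiff ℝ ((n:WithTop ℕ∞) + 1) (JJ k f) := by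
        rw [contDiff_succ_iff_deriv]
        refine ⟨fun t => (JJ_deriv k f h1 t).differentiableAt, by simp, ?_⟩
        rw [hd]; exact i1
      exact_mod_cast this
    · intro j hj
      cases j with
      | zero => simp
      | succ j =>
        rw [iteratedDeriv_succ', iteratedDeriv_succ', hd, i2 j (by omega)]
        congr 1; omega

lemma JJ_bound (k : ℕ) (f : ℝ → ℝ) (B : ℝ) (hf : ∀ t, |f t| ≤ B) (t : ℝ) : |JJ k f t| ≤ B := by
  have := intervalIntegral.norm_integral_le_of_norm_le_const (a := 0) (b := 1)
    (f := fun s : ℝ => s ^ k * f (s * t)) (C := B) (by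
      intro s hs
      rw [Set.uIoc_of_le zero_le_one] at hs
      rw [norm_mul]
      have h4 : ‖s ^ k‖ ≤ 1 := by
        rw [norm_pow, Real.norm_eq_abs, abs_of_pos hs.1]
        exact pow_le_one₀ hs.1.le hs.2
      calc _ ≤ 1 * B := mul_le_mul h4 (hf _) (abs_nonneg _) zero_le_one
        _ = B := one_mul _)
  simpa [JJ] using this

lemma JJ_zero (k : ℕ) (f : ℝ → ℝ) : JJ k f 0 = f 0 / (k+1) := by
  simp [JJ, integral_pow]
  ring

/-- Hadamard's lemma with bounds. -/
lemma hadamard (n : ℕ) (F : ℝ → ℝ) (hF : ContDiff ℝ ((n+1 : ℕ)) F) (h0 : F 0 = 0) :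
    ∃ H : ℝ → ℝ, ContDiff ℝ n H ∧ (∀ t, F t = t * H t) ∧ H 0 = deriv F 0 ∧
      (1 ≤ n → deriv H 0 = iteratedDeriv 2 F 0 / 2) ∧
      (∀ t, (t = 0 ∧ H t = deriv F 0) ∨ ∃ c, H t = deriv F c) ∧
      ∀ k ≤ n, ∀ B, (∀ t, |iteratedDeriv (k+1) F t| ≤ B) → ∀ t, |iteratedDeriv k H t| ≤ B := by
  have h1 : ContDiff ℝ 1 F := hF.of_le (by norm_cast; omega)
  have hdc : Continuous (deriv F) := h1.continuous_deriv le_rfl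
  have hf' : ContDiff ℝ n (deriv F) := by
    have : ContDiff ℝ ((n:WithTop ℕ∞) + 1) F := by exact_mod_cast hF
    exact (contDiff_succ_iff_deriv.mp this).2.2
  obtain ⟨i1, i2⟩ := JJ_contDiff n 0 (deriv F) hf'
  have hmul : ∀ t, F t = t * JJ 0 (deriv F) t := by
    intro t
    have h2 : ∫ s in (0:ℝ)..t, deriv F s = F t - F 0 :=
      intervalIntegral.integral_deriv_eq_sub (fun x _ => (h1.differentiable (by norm_num)) x)
        (hdc.intervalIntegrable _ _)
    have h3 := intervalIntegral.mul_integral_comp_mul_right (a := 0) (b := 1) (f := deriv F) (c := t)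
    simp only [zero_mul, one_mul] at h3
    rw [h0, sub_zero] at h2
    simp only [JJ, pow_zero, one_mul]
    rw [h3, h2]
  refine ⟨JJ 0 (deriv F), i1, hmul, ?_, ?_, ?_, ?_⟩
  · rw [JJ_zero]; simp
  · intro hn
    have := i2 1 hn
    rw [iteratedDeriv_one] at this
    rw [this, JJ_zero, iteratedDeriv_succ' (n := 1)]
    norm_num
  · intro t
    by_cases ht : t = 0
    · left; subst ht; rw [JJ_zero]; simp
    · right
      have hm := hmul t
      have hD : Differentiable ℝ F := h1.differentiable (by norm_num)
      rcases lt_or_gt_of_ne ht with h | h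
      · obtain ⟨c, _, hc⟩ := exists_deriv_eq_slope F h hD.continuous.continuousOn hD.differentiableOn
        refine ⟨c, ?_⟩
        rw [hc, h0, hm]; field_simp; ring
      · obtain ⟨c, _, hc⟩ := exists_deriv_eq_slope F h hD.continuous.continuousOn hD.differentiableOn
        refine ⟨c, ?_⟩
        rw [hc, h0, hm]; field_simp; ring
  · intro k hk B hB t
    rw [i2 k hk]
    apply JJ_bound
    intro s
    rw [← iteratedDeriv_succ']
    exact hB s

/-- bounded derivatives -/
def BD (n : ℕ) (B : ℝ) (f : ℝ → ℝ) : Prop :=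
  ContDiff ℝ n f ∧ ∀ k ≤ n, ∀ t, |iteratedDeriv k f t| ≤ B

lemma BD_mul (n : ℕ) (A B : ℝ) (f g : ℝ → ℝ) (hA : 0 ≤ A) (hB : 0 ≤ B) (hf : BD n A f) (hg : BD n B g) :
    BD n (2 ^ n * A * B) (fun t => f t * g t) := by
  refine ⟨hf.1.mul hg.1, ?_⟩
  intro k hk t
  have := norm_iteratedFDeriv_mul_le hf.1 hg.1 t (n := k) (by exact_mod_cast hk)
  simp only [norm_iteratedFDeriv_eq_norm_iteratedDeriv] at this
  rw [← Real.norm_eq_abs]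
  refine this.trans ?_
  calc _ ≤ ∑ i ∈ Finset.range (k + 1), (k.choose i : ℝ) * A * B := by
        apply Finset.sum_le_sum
        intro i hi
        have h1 := hf.2 i (by rw [Finset.mem_range] at hi; omega) t
        have h2 := hg.2 (k - i) (by omega) t
        rw [← Real.norm_eq_abs] at h1 h2
        gcongr
    _ = 2 ^ k * A * B := by
        rw [← Finset.sum_mul, ← Finset.sum_mul]
        congr 2
        exact_mod_cast Nat.sum_range_choose k
    _ ≤ _ := by
        gcongr
        norm_num

lemma BD_sub (n : ℕ) (A B : ℝ) (f g : ℝ → ℝ) (hf : BD n A f) (hg : BD n B g) :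
    BD n (A + B) (fun t => f t - g t) := by
  refine ⟨hf.1.sub hg.1, ?_⟩
  intro k hk t
  have h := iteratedDeriv_fun_sub (n := k) (x := t) (f := f) (g := g)
    ((hf.1.of_le (by exact_mod_cast hk)).contDiffAt) ((hg.1.of_le (by exact_mod_cast hk)).contDiffAt)
  rw [h]
  exact (abs_sub _ _).trans (add_le_add (hf.2 k hk t) (hg.2 k hk t))

lemma BD_comp (n : ℕ) (A D : ℝ) (q f : ℝ → ℝ) (hA : 0 ≤ A) (hD : 1 ≤ D) (hq : BD n A q)
    (hf : ContDiff ℝ n f) (hfb : ∀ k, 1 ≤ k → k ≤ n → ∀ t, |iteratedDeriv k f t| ≤ D) :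
    BD n (n.factorial * A * D ^ n) (fun t => q (f t)) := by
  refine ⟨hq.1.comp hf, ?_⟩
  intro k hk t
  have := norm_iteratedFDeriv_comp_le hq.1 hf (n := k) (by exact_mod_cast hk) t (C := A) (D := D)
    (by
      intro i hi
      rw [norm_iteratedFDeriv_eq_norm_iteratedDeriv]
      exact hq.2 i (hi.trans hk) _)
    (by
      intro i hi hi2
      rw [norm_iteratedFDeriv_eq_norm_iteratedDeriv]
      exact (hfb i hi (hi2.trans hk) t).trans (le_self_pow₀ hD (by omega)))
  rw [norm_iteratedFDeriv_eq_norm_iteratedDeriv] at this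
  refine this.trans ?_
  have h1 : (k.factorial : ℝ) ≤ n.factorial := by exact_mod_cast Nat.factorial_le hk
  gcongr

lemma cutoff (n : ℕ) (q : ℝ → ℝ) (c r R : ℝ) (hr : 0 < r) (hrR : r < R)
    (hq : ∀ x, |x - c| < R → ContDiffAt ℝ n q x) :
    ∃ (p : ℝ → ℝ) (C : ℝ), 0 ≤ C ∧ BD n C p ∧ ∀ x, |x - c| ≤ r → p x = q x := by
  let b : ContDiffBump c := ⟨r, (r+R)/2, hr, by linarith⟩
  have hsm : ContDiff ℝ n (fun x => b x * q x) := by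
    rw [contDiff_iff_contDiffAt]
    intro x
    by_cases hx : |x - c| < R
    · exact b.contDiffAt.mul (hq x hx)
    · have h0 : (fun x => b x * q x) =ᶠ[𝓝 x] fun _ => 0 := by
        have : ∀ᶠ y in 𝓝 x, (r+R)/2 < |y - c| := by
          have hc : Continuous fun y : ℝ => |y - c| := by fun_prop
          exact hc.continuousAt.eventually (lt_mem_nhds (by linarith))
        filter_upwards [this] with y hy
        rw [b.zero_of_le_dist (by rw [Real.dist_eq]; exact hy.le), zero_mul]
      exact (contDiffAt_const).congr_of_eventuallyEq h0
  have hcs : HasCompactSupport (fun x => b x * q x) := b.hasCompactSupport.mul_right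
  have hb : ∀ k ≤ n, ∃ C, ∀ t, |iteratedDeriv k (fun x => b x * q x) t| ≤ C := by
    intro k hk
    have h1 : HasCompactSupport (iteratedFDeriv ℝ k (fun x => b x * q x)) := hcs.iteratedFDeriv k
    obtain ⟨C, hC⟩ := h1.exists_bound_of_continuous
      (hsm.continuous_iteratedFDeriv (by exact_mod_cast hk))
    refine ⟨C, fun t => ?_⟩
    have := hC t
    rwa [norm_iteratedFDeriv_eq_norm_iteratedDeriv] at this
  choose! C hC using hb
  refine ⟨_, ∑ k ∈ Finset.range (n+1), |C k|, Finset.sum_nonneg fun _ _ => abs_nonneg _, ⟨hsm, ?_⟩, ?_⟩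
  · intro k hk t
    refine (hC k hk t).trans ((le_abs_self _).trans ?_)
    exact Finset.single_le_sum (f := fun k => |C k|) (fun _ _ => abs_nonneg _)
      (Finset.mem_range.mpr (by omega))
  · intro x hx
    have : b x = 1 := b.one_of_mem_closedBall (by
      rw [Metric.mem_closedBall, Real.dist_eq]; exact hx)
    simp [this]

lemma abs_le_of_deriv (f f' : ℝ → ℝ) (C : ℝ) (k : ℕ) (hf : ∀ x, HasDerivAt f (f' x) x) (h0 : f 0 = 0)
    (hb : ∀ x, 0 ≤ x → |f' x| ≤ C * (k+1) * x ^ k) (x : ℝ) (hx : 0 ≤ x) : |f x| ≤ C * x ^ (k+1) := by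
  have := image_norm_le_of_norm_deriv_right_le_deriv_boundary (f := f) (f' := f') (a := 0) (b := x)
    (B := fun y => C * y ^ (k+1)) (B' := fun y => C * (k+1) * y ^ k)
    (fun y _ => (hf y).continuousAt.continuousWithinAt) (fun y _ => (hf y).hasDerivWithinAt)
    (by simp [h0])
    (fun y => by
      have := (hasDerivAt_pow (k+1) y).const_mul C
      exact HasDerivAt.congr_deriv this (by rw [Nat.add_sub_cancel]; push_cast; ring))
    (fun y hy => hb y hy.1)
  exact this (Set.right_mem_Icc.mpr hx)

lemma cell (g : ℝ → ℝ) (M : ℝ) (hg : ContDiff ℝ 4 g) (hM : ∀ t, |iteratedDeriv 4 g t| ≤ M) (c x : ℝ)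
    (hx : 0 ≤ x) :
    |(∫ t in c..(c+x), g t) - x * (g c + g (c+x)) / 2 + x^2/12 * (deriv g (c+x) - deriv g c)|
      ≤ M * x ^ 5 := by
  have hM0 : 0 ≤ M := (abs_nonneg _).trans (hM 0)
  have hD : ∀ k < 4, ∀ y, HasDerivAt (fun y => iteratedDeriv k g (c + y)) (iteratedDeriv (k+1) g (c+y)) y := by
    intro k hk y
    have h1 : Differentiable ℝ (iteratedDeriv k g) :=
      hg.differentiable_iteratedDeriv k (by exact_mod_cast hk)
    have h2 := (h1 (c+y)).hasDerivAt
    rw [← iteratedDeriv_succ] at h2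
    exact h2.comp_const_add c y
  have d0 := hD 0 (by norm_num)
  have d1 := hD 1 (by norm_num)
  have d2 := hD 2 (by norm_num)
  have d3 := hD 3 (by norm_num)
  simp only [iteratedDeriv_zero, iteratedDeriv_one, zero_add, Nat.reduceAdd] at d0 d1 d2 d3
  have hi : ∀ y, HasDerivAt (fun y => ∫ t in c..(c+y), g t) (g (c+y)) y := by
    intro y
    have := intervalIntegral.integral_hasDerivAt_right (hg.continuous.intervalIntegrable c (c+y))
      (hg.continuous.stronglyMeasurableAtFilter _ _) hg.continuous.continuousAt
    exact this.comp_const_add c y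
  have hid := fun y : ℝ => hasDerivAt_id' y
  let E2 := fun y => (deriv g (c+y) - deriv g c)/6 - y * iteratedDeriv 2 g (c+y)/6
    + y^2 * iteratedDeriv 3 g (c+y) / 12
  let E1 := fun y => (g (c+y) - g c)/2 - y * deriv g (c+y)/3 - y * deriv g c / 6
    + y^2 * iteratedDeriv 2 g (c+y) / 12
  let E0 := fun y => (∫ t in c..(c+y), g t) - y * (g c + g (c+y)) / 2 + y^2 * (deriv g (c+y) - deriv g c)/12
  have e2 : ∀ y, HasDerivAt E2 (y^2 * iteratedDeriv 4 g (c+y)/12) y := by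
    intro y
    have := ((((d1 y).sub_const (deriv g c)).div_const 6).sub (((hid y).mul (d2 y)).div_const 6)).add
      ((((hid y).pow 2).mul (d3 y)).div_const 12)
    exact HasDerivAt.congr_deriv this (by simp; ring)
  have e1 : ∀ y, HasDerivAt E1 (E2 y) y := by
    intro y
    have := (((((d0 y).sub_const (g c)).div_const 2).sub (((hid y).mul (d1 y)).div_const 3)).sub
      (((hid y).mul_const (deriv g c)).div_const 6)).add
      ((((hid y).pow 2).mul (d2 y)).div_const 12)
    exact HasDerivAt.congr_deriv this (by simp [E2]; ring)
  have e0 : ∀ y, HasDerivAt E0 (E1 y) y := by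
    intro y
    have := ((hi y).sub (((hid y).mul ((d0 y).const_add (g c))).div_const 2)).add
      ((((hid y).pow 2).mul ((d1 y).sub_const (deriv g c))).div_const 12)
    exact HasDerivAt.congr_deriv this (by simp [E1]; ring)
  have b2 : ∀ y, 0 ≤ y → |E2 y| ≤ M * y ^ 3 := abs_le_of_deriv E2 _ M 2 e2 (by simp [E2]) (by
    intro y hy
    have h := hM (c+y)
    rw [abs_div, abs_mul, abs_of_nonneg (by positivity : 0 ≤ y^2), abs_of_pos (by norm_num : (0:ℝ) < 12)]
    have : y^2 * |iteratedDeriv 4 g (c+y)| ≤ y^2 * M := by gcongr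
    have h3 : 0 ≤ y^2 * M := by positivity
    push_cast
    linarith)
  have b1 : ∀ y, 0 ≤ y → |E1 y| ≤ M * y ^ 4 := abs_le_of_deriv E1 _ M 3 e1 (by simp [E1]) (by
    intro y hy
    have h := b2 y hy
    have h3 : 0 ≤ M * y^3 := by positivity
    push_cast
    linarith)
  have b0 : ∀ y, 0 ≤ y → |E0 y| ≤ M * y ^ 5 := abs_le_of_deriv E0 _ M 4 e0 (by simp [E0]) (by
    intro y hy
    have h := b1 y hy
    have h3 : 0 ≤ M * y^4 := by positivity
    push_cast
    linarith)
  have := b0 x hx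
  simp only [E0] at this
  convert this using 2
  ring

lemma pcut (L r : ℝ) (hr : 0 < r) (hrL : r < L) :
    ∃ (p : ℝ → ℝ) (C : ℝ), 0 ≤ C ∧ BD 5 C p ∧
      (∀ y, |y| ≤ r → y ≠ 0 → p y = (π * y / L) * Real.cot (π * y / L)) ∧ p 0 = 1 ∧
      deriv p 0 = 0 := by
  have hL : 0 < L := hr.trans hrL
  obtain ⟨s, s1, s2, s3, -, -, -⟩ := hadamard 5 Real.sin Real.contDiff_sin Real.sin_zero
  have s3' : s 0 = 1 := by simpa using s3
  have hs : ∀ x, |x| < π → s x ≠ 0 := by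
    intro x hx h
    by_cases h0 : x = 0
    · rw [h0, s3'] at h; norm_num at h
    · have h1 : Real.sin x = 0 := by rw [s2, h, mul_zero]
      rw [abs_lt] at hx
      exact h0 ((Real.sin_eq_zero_iff_of_lt_of_lt hx.1 hx.2).mp h1)
  have habs : ∀ y, |y| < L → |π * y / L| < π := by
    intro y hy
    rw [abs_div, abs_mul, abs_of_pos pi_pos, abs_of_pos hL, div_lt_iff₀ hL]
    exact mul_lt_mul_of_pos_left hy pi_pos
  obtain ⟨p, C, hC, hp, hpq⟩ := cutoff 5 (fun y => Real.cos (π * y / L) / s (π * y / L)) 0 r L hr hrL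
    (by
      intro y hy
      rw [sub_zero] at hy
      have hlin : ContDiff ℝ (5:ℕ) (fun y : ℝ => π * y / L) := by fun_prop
      refine ContDiffAt.div ?_ ?_ (hs _ (habs y hy))
      · exact (Real.contDiff_cos.comp hlin).contDiffAt
      · exact (s1.comp hlin).contDiffAt)
  have hform : ∀ y, |y| ≤ r → y ≠ 0 → p y = (π * y / L) * Real.cot (π * y / L) := by
    intro y hy hy0
    rw [hpq y (by simpa using hy), Real.cot_eq_cos_div_sin, s2 (π * y / L)]
    have h1 := hs _ (habs y (hy.trans_lt hrL))
    have h2 : π * y / L ≠ 0 := by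
      have := pi_pos.ne'
      positivity
    field_simp
  refine ⟨p, C, hC, hp, hform, ?_, ?_⟩
  · rw [hpq 0 (by simpa using hr.le)]; simp [s3']
  · have hev : p =ᶠ[𝓝 0] fun y => p (-y) := by
      filter_upwards [Metric.ball_mem_nhds (0:ℝ) hr] with y hy
      have hy' : |y| ≤ r := by
        have : |y| < r := by simpa using hy
        exact this.le
      by_cases h0 : y = 0
      · simp [h0]
      · rw [hform y hy' h0, hform (-y) (by simpa using hy') (by simpa using h0)]
        rw [Real.cot_eq_cos_div_sin, Real.cot_eq_cos_div_sin]
        have : π * -y / L = -(π * y / L) := by ring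
        rw [this, Real.cos_neg, Real.sin_neg]
        rw [div_neg]; ring
    have h1 := hev.deriv_eq
    rw [deriv_comp_neg] at h1
    simp at h1
    linarith

lemma BD_const (n : ℕ) (c : ℝ) : BD n |c| (fun _ => c) := by
  refine ⟨contDiff_const, ?_⟩
  intro k hk t
  rw [iteratedDeriv_const]
  split_ifs <;> simp

lemma BD_mono (n : ℕ) (A B : ℝ) (f : ℝ → ℝ) (hAB : A ≤ B) (h : BD n A f) : BD n B f :=
  ⟨h.1, fun k hk t => (h.2 k hk t).trans hAB⟩

lemma kernel (L m₁ m₂ : ℝ) (hL : 0 < L) (hm₁ : 0 < m₁) (hm₂ : 0 < m₂) :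
    ∃ M : ℝ, 0 ≤ M ∧ ∀ φ : ℝ → ℝ, ContDiff ℝ 6 φ →
          (∀ α : ℝ, φ (α + 1) = φ α - L) →
          (∀ α : ℝ, deriv φ α ≤ -m₁) →
          (∀ k : ℕ, 1 ≤ k → k ≤ 6 → ∀ α : ℝ, |iteratedDeriv k φ α| ≤ m₂) →
          ∀ A : ℝ, ∃ g : ℝ → ℝ, ContDiff ℝ 4 g ∧ (∀ t, |iteratedDeriv 4 g t| ≤ M) ∧
            g 0 = iteratedDeriv 2 φ A / 2 / (deriv φ A) ^ 2 ∧
            ∀ t, t ≠ 0 → |t| < 3/4 →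
              (π / L) * Real.cot (π * (φ A - φ (A + t)) / L)
                = (-1 / deriv φ A) * (π * Real.cot (π * t)) + g t := by
  obtain ⟨p, Cp, hCp, hp, hpf, hp0, hpd⟩ := pcut L (max (L - m₁/4) (L/2))
    (lt_max_of_lt_right (by positivity)) (max_lt (by linarith) (by linarith))
  obtain ⟨u, Cu, hCu, hu, huf, hu0, hud⟩ := pcut 1 (3/4) (by norm_num) (by norm_num)
  obtain ⟨ρ, Cρ, hCρ, hρ, hρf⟩ := cutoff 5 (fun x => x⁻¹) (m₁ + m₂) m₂ (m₁ + m₂) hm₂ (by linarith)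
    (by
      intro x hx
      have : x ≠ 0 := by
        rintro rfl
        rw [zero_sub, abs_neg, abs_of_pos (by positivity)] at hx
        exact lt_irrefl _ hx
      exact contDiffAt_inv ℝ this)
  set D := max 1 m₂ with hDdef
  have hD1 : 1 ≤ D := le_max_left _ _
  have hD2 : m₂ ≤ D := le_max_right _ _
  refine ⟨2^5 * ((5:ℕ).factorial * Cp * D^5) * ((5:ℕ).factorial * Cρ * D^5) + 2^5 * Cu * m₁⁻¹,
    by positivity, ?_⟩
  intro φ hφ hper hder hbd A
  have hφd : Differentiable ℝ φ := hφ.differentiable (by norm_num)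
  set ψ : ℝ → ℝ := fun t => φ A - φ (A + t) with hψ
  have hψs : ContDiff ℝ (6:ℕ) ψ := by
    have : ContDiff ℝ (6:ℕ) φ := by exact_mod_cast hφ
    fun_prop
  have hψd : ∀ t, deriv ψ t = - deriv φ (A + t) := by
    intro t
    have := ((hφd (A+t)).hasDerivAt.comp_const_add A t).const_sub (φ A)
    exact this.deriv
  have hψk : ∀ k, 1 ≤ k → ∀ t, iteratedDeriv k ψ t = - iteratedDeriv k φ (A + t) := by
    intro k hk t
    obtain ⟨j, rfl⟩ : ∃ j, k = j + 1 := ⟨k - 1, by omega⟩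
    rw [iteratedDeriv_succ', iteratedDeriv_succ']
    have : deriv ψ = fun t => - (deriv φ (A + t)) := funext hψd
    rw [this, iteratedDeriv_fun_neg, iteratedDeriv_comp_const_add]
  have hψb : ∀ k, 1 ≤ k → k ≤ 6 → ∀ t, |iteratedDeriv k ψ t| ≤ m₂ := by
    intro k hk hk6 t
    rw [hψk k hk, abs_neg]
    exact hbd k hk hk6 _
  obtain ⟨h, hh, hmul, hh0, hh1, hval, hhb⟩ := hadamard 5 ψ hψs (by simp [hψ])
  have hhr : ∀ t, m₁ ≤ h t ∧ h t ≤ m₂ := by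
    intro t
    have key : ∃ c, h t = deriv ψ c := by
      rcases hval t with ⟨_, h2⟩ | h2
      · exact ⟨0, h2⟩
      · exact h2
    obtain ⟨c, hc⟩ := key
    rw [hc]
    refine ⟨by rw [hψd]; linarith [hder (A + c)], ?_⟩
    have := hψb 1 le_rfl (by norm_num) c
    rw [iteratedDeriv_one] at this
    exact (le_abs_self _).trans this
  have hρh : ∀ t, ρ (h t) = (h t)⁻¹ := by
    intro t
    apply hρf
    rw [abs_le]
    constructor <;> linarith [(hhr t).1, (hhr t).2]
  have hG : BD 5 (2^5 * ((5:ℕ).factorial * Cp * D^5) * ((5:ℕ).factorial * Cρ * D^5))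
      (fun t => p (ψ t) * ρ (h t)) := by
    apply BD_mul 5 _ _ _ _ (by positivity) (by positivity)
    · apply BD_comp 5 _ _ _ _ hCp hD1 hp (hψs.of_le (by norm_num))
      intro k hk hk5 t
      exact (hψb k hk (by omega) t).trans hD2
    · apply BD_comp 5 _ _ _ _ hCρ hD1 hρ hh
      intro k hk hk5 t
      exact (hhb k hk5 m₂ (hψb (k+1) (by omega) (by omega)) t).trans hD2
  have hG0 : BD 5 (2^5 * Cu * m₁⁻¹) (fun t => u t * (h 0)⁻¹) := by
    apply BD_mul 5 _ _ _ _ hCu (by positivity) hu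
    apply BD_mono _ _ _ _ _ (BD_const 5 _)
    have := (hhr 0).1
    rw [abs_of_pos (inv_pos.mpr (by linarith))]
    gcongr
  have hF := BD_sub 5 _ _ _ _ hG hG0
  obtain ⟨g, gs, gmul, g0, -, -, gb⟩ := hadamard 4 _ hF.1 (by
    have : ψ 0 = 0 := by simp [hψ]
    simp [this, hρh, hp0, hu0])
  have hh0' : h 0 = - deriv φ A := by rw [hh0, hψd]; simp
  have hφA : deriv φ A < 0 := by linarith [hder A]
  refine ⟨g, by exact_mod_cast gs, gb 4 le_rfl _ (hF.2 5 le_rfl), ?_, ?_⟩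
  · rw [g0]
    have hψ0 : HasDerivAt ψ (deriv ψ 0) 0 := (hψs.differentiable (by norm_num) 0).hasDerivAt
    have e1 : HasDerivAt p 0 (ψ 0) := by
      have hz : ψ 0 = 0 := by simp [hψ]
      have := (hp.1.differentiable (by norm_num) 0).hasDerivAt
      rw [hpd] at this
      rw [hz]; exact this
    have e2 := e1.comp 0 hψ0
    have e3 : HasDerivAt h (deriv h 0) 0 := (hh.differentiable (by norm_num) 0).hasDerivAt
    have e4 := e3.inv (by rw [hh0']; exact (neg_pos.mpr hφA).ne')
    have e5 : HasDerivAt u 0 0 := by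
      have := (hu.1.differentiable (by norm_num) 0).hasDerivAt
      rw [hud] at this
      exact this
    have e6 := (e2.mul e4).sub (e5.mul_const (h 0)⁻¹)
    have e7 : (fun t => p (ψ t) * ρ (h t) - u t * (h 0)⁻¹) =
        ((p ∘ ψ * h⁻¹) - fun y => u y * (h 0)⁻¹) := by
      ext t; simp [hρh]
    rw [e7, e6.deriv]
    have hz : ψ 0 = 0 := by simp [hψ]
    simp only [Function.comp, hz, hp0]
    rw [hh1 (by norm_num), hψk 2 (by norm_num), hh0']
    simp
    ring
  · intro t ht ht34
    have h1 := gmul t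
    simp only [hρh] at h1
    rw [abs_lt] at ht34
    have lip : ∀ x y : ℝ, x ≤ y → φ y - φ x ≤ -m₁ * (y - x) := by
      intro x y hxy
      exact image_sub_le_mul_sub_of_deriv_le hφd (fun x => hder x) hxy
    have hψle : |ψ t| ≤ max (L - m₁/4) (L/2) := by
      refine le_trans ?_ (le_max_left _ _)
      have a1 := lip (A + t) (A + 1) (by linarith)
      have a2 := lip (A - 1) (A + t) (by linarith)
      have a3 := hper A
      have a4 := hper (A - 1)
      rw [sub_add_cancel] at a4
      rw [abs_le]
      simp only [hψ]
      constructor <;> nlinarith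
    have hhp := (hhr t).1
    have hht : h t ≠ 0 := by linarith
    have hψne : ψ t ≠ 0 := by
      rw [hmul]; exact mul_ne_zero ht hht
    rw [hpf _ hψle hψne, huf t (abs_le.mpr ⟨by linarith, by linarith⟩) ht] at h1
    rw [hh0'] at h1
    change π / L * Real.cot (π * ψ t / L) = _
    generalize Real.cot (π * ψ t / L) = X at *
    rw [div_one] at h1
    generalize Real.cot (π * t) = Y at *
    rw [hmul t] at h1
    have hne := hφA.ne
    field_simp at h1 ⊢
    linarith

lemma per_sum (f : ℝ → ℝ) (hf : ∀ t, f (t + 1) = f t) (N : ℕ) (hN : 0 < N) (i : ℕ) :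
    ∑ j ∈ Finset.range N, f (((j:ℝ) - i) / N) = ∑ j ∈ Finset.range N, f ((j:ℝ) / N) := by
  have hN' : (N:ℝ) ≠ 0 := by positivity
  induction i with
  | zero => simp
  | succ i ih =>
    rw [← ih]
    have h1 := Finset.sum_range_succ (fun j : ℕ => f (((j:ℝ) - (i+1:ℕ)) / N)) N
    have h2 := Finset.sum_range_succ' (fun j : ℕ => f (((j:ℝ) - (i+1:ℕ)) / N)) N
    have h3 : f (((N:ℝ) - (i+1:ℕ)) / N) = f ((((0:ℕ):ℝ) - (i+1:ℕ)) / N) := by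
      rw [← hf ((((0:ℕ):ℝ) - (i+1:ℕ)) / N)]
      congr 1
      field_simp
      push_cast; ring
    have h4 : ∑ j ∈ Finset.range N, f ((((j+1:ℕ):ℝ) - (i+1:ℕ)) / N)
        = ∑ j ∈ Finset.range N, f (((j:ℝ) - i) / N) := by
      apply Finset.sum_congr rfl
      intro j _
      congr 1
      push_cast; ring
    linarith

noncomputable def ww (c t : ℝ) : ℝ := c * (π * Real.cot (π * t))

lemma ww_per (c t : ℝ) : ww c (t + 1) = ww c t := by
  unfold ww
  rw [Real.cot_eq_cos_div_sin, Real.cot_eq_cos_div_sin, mul_add, mul_one, Real.cos_add_pi,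
    Real.sin_add_pi, neg_div_neg_eq]

lemma ww_neg (c t : ℝ) : ww c (-t) = - ww c t := by
  unfold ww
  rw [Real.cot_eq_cos_div_sin, Real.cot_eq_cos_div_sin, mul_neg, Real.cos_neg,
    Real.sin_neg, div_neg]
  ring

lemma ww_cont (c t : ℝ) (h0 : 0 < t) (h1 : t < 1) : ContinuousAt (ww c) t := by
  have hs : Real.sin (π * t) ≠ 0 := by
    apply (Real.sin_pos_of_pos_of_lt_pi (by positivity) _).ne'
    nlinarith [pi_pos]
  have : ww c = fun t => c * (π * (Real.cos (π * t) / Real.sin (π * t))) := by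
    ext t; simp [ww, Real.cot_eq_cos_div_sin]
  rw [this]
  have hc : ContinuousAt (fun t => Real.cos (π * t)) t := by fun_prop
  have hsn : ContinuousAt (fun t => Real.sin (π * t)) t := by fun_prop
  exact ((hc.div hsn hs).const_mul π).const_mul c

lemma ww_int (c δ : ℝ) : ∫ t in δ..(1-δ), ww c t = 0 := by
  have h := intervalIntegral.integral_comp_sub_left (a := δ) (b := 1 - δ) (ww c) 1
  have e : ∀ x, ww c (1 - x) = - ww c x := by
    intro x
    rw [← ww_neg, ← ww_per c (-x)]; congr 1; ring
  simp only [e, intervalIntegral.integral_neg, sub_sub_cancel] at h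
  linarith

lemma ww_sum (c : ℝ) (N : ℕ) (hN : 0 < N) : ∑ j ∈ Finset.range N, ww c ((j:ℝ) / N) = 0 := by
  have h1 := per_sum (ww c) (ww_per c) N hN (N - 1)
  have h2 := Finset.sum_range_reflect (fun j : ℕ => ww c ((j:ℝ) / N)) N
  have h3 : ∑ j ∈ Finset.range N, ww c (((j:ℝ) - (N - 1 : ℕ)) / N)
      = - ∑ j ∈ Finset.range N, ww c (((N - 1 - j : ℕ):ℝ) / N) := by
    rw [← Finset.sum_neg_distrib]
    apply Finset.sum_congr rfl
    intro j hj
    rw [Finset.mem_range] at hj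
    rw [← ww_neg]
    congr 1
    rw [Nat.cast_sub (show j ≤ N - 1 by omega)]
    ring
  linarith

lemma kap_cont (κ g : ℝ → ℝ) (c : ℝ) (hper : ∀ t, κ (t + 1) = κ t) (hg : Continuous g)
    (hκ : ∀ t, t ≠ 0 → |t| < 3/4 → κ t = ww c t + g t) (t : ℝ) (h0 : 0 < t) (h1 : t < 1) :
    ContinuousAt κ t := by
  by_cases h : t < 3/4
  · have he : κ =ᶠ[𝓝 t] fun s => ww c s + g s := by
      filter_upwards [Ioo_mem_nhds h0 h] with s hs
      exact hκ s hs.1.ne' (by rw [abs_of_pos hs.1]; exact hs.2)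
    rw [continuousAt_congr he]
    exact (ww_cont c t h0 h1).add hg.continuousAt
  · have he : κ =ᶠ[𝓝 t] fun s => ww c s + g (s - 1) := by
      filter_upwards [Ioo_mem_nhds (show 1/4 < t by linarith) h1] with s hs
      have h1 := hper (s - 1)
      have h2 := ww_per c (s - 1)
      rw [sub_add_cancel] at h1 h2
      rw [h1, h2]
      exact hκ (s - 1) (by linarith [hs.2]) (by rw [abs_lt]; constructor <;> linarith [hs.1, hs.2])
    rw [continuousAt_congr he]
    exact (ww_cont c t h0 h1).add (by fun_prop)

lemma ii_of_cont (f : ℝ → ℝ) (hf : ∀ t, 0 < t → t < 1 → ContinuousAt f t) (x y : ℝ) (hx : 0 < x) (hx1 : x < 1)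
    (hy : 0 < y) (hy1 : y < 1) : IntervalIntegrable f volume x y := by
  apply ContinuousOn.intervalIntegrable
  intro t ht
  have h1 := Set.mem_uIcc.mp ht
  apply (hf t _ _).continuousWithinAt
  · rcases h1 with h | h <;> linarith [h.1]
  · rcases h1 with h | h <;> linarith [h.2]

lemma quad (N : ℕ) (hN : 2 ≤ N) (κ g : ℝ → ℝ) (c M : ℝ) (hper : ∀ t, κ (t + 1) = κ t) (hκ0 : κ 0 = 0)
    (hg : ContDiff ℝ 4 g) (hM : ∀ t, |iteratedDeriv 4 g t| ≤ M)
    (hκ : ∀ t, t ≠ 0 → |t| < 3/4 → κ t = ww c t + g t) :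
    ∃ P, Tendsto (fun δ : ℝ => ∫ t in δ..(1-δ), κ t) (𝓝[>] (0:ℝ)) (𝓝 P) ∧
      |P - ((N:ℝ)⁻¹ * ∑ j ∈ Finset.range N, κ ((j:ℝ)/N) + (N:ℝ)⁻¹ * g 0)| ≤ M * (N:ℝ)⁻¹ ^ 4 := by
  have hgc : Continuous g := hg.continuous
  have hNpos : (0:ℝ) < N := by exact_mod_cast (by omega : 0 < N)
  have hN2 : (2:ℝ) ≤ N := by exact_mod_cast hN
  obtain ⟨m, hm⟩ : ∃ m : ℕ, m = N / 2 := ⟨_, rfl⟩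
  have hm1 : 2 * m ≤ N := by omega
  have hm2 : N ≤ 2 * m + 1 := by omega
  have hm1' : 2 * (m:ℝ) ≤ N := by exact_mod_cast hm1
  have hm2' : (N:ℝ) ≤ 2 * m + 1 := by exact_mod_cast hm2
  set t₀ : ℝ := -(m:ℝ) / N with ht₀
  have t₀lo : -1/2 ≤ t₀ := by
    rw [ht₀, le_div_iff₀ hNpos]; linarith
  have t₀hi : t₀ < -1/4 + 1/1000 := by
    rw [ht₀, div_lt_iff₀ hNpos]
    have : 1 ≤ m := by omega
    have : (1:ℝ) ≤ m := by exact_mod_cast this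
    nlinarith
  have t₀hi' : t₀ < -1/4 := by
    rw [ht₀, div_lt_iff₀ hNpos]
    have : 1 ≤ m := by omega
    have : (1:ℝ) ≤ m := by exact_mod_cast this
    nlinarith
  -- germ periodicity
  have hgerm : g =ᶠ[𝓝 t₀] fun t => g (t + 1) := by
    filter_upwards [Ioo_mem_nhds (show -3/4 < t₀ by linarith) t₀hi'] with t ht
    have h1 := hκ t (by linarith [ht.2]) (by rw [abs_lt]; constructor <;> linarith [ht.1, ht.2])
    have h2 := hκ (t+1) (by linarith [ht.1]) (by rw [abs_lt]; constructor <;> linarith [ht.1, ht.2])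
    rw [hper, ww_per] at h2
    linarith
  have hgv : g t₀ = g (t₀ + 1) := hgerm.self_of_nhds
  have hgd : deriv g t₀ = deriv g (t₀ + 1) := by
    rw [hgerm.deriv_eq, deriv_comp_add_const]
  refine ⟨∫ t in t₀..(t₀+1), g t, ?_, ?_⟩
  · have hlim : Tendsto (fun δ : ℝ => (∫ t in t₀..(-δ), g t) + ∫ t in δ..(t₀+1), g t) (𝓝[>] (0:ℝ))
        (𝓝 (∫ t in t₀..(t₀+1), g t)) := by
      have hc : Continuous (fun δ : ℝ => (∫ t in t₀..(-δ), g t) + ∫ t in δ..(t₀+1), g t) := by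
        have hii : ∀ a b, IntervalIntegrable g volume a b := fun a b => hgc.intervalIntegrable a b
        have c1 : Continuous (fun δ : ℝ => ∫ t in t₀..(-δ), g t) :=
          (intervalIntegral.continuous_primitive hii t₀).comp continuous_neg
        have c2 : Continuous (fun δ : ℝ => ∫ t in δ..(t₀+1), g t) := by
          have := (intervalIntegral.continuous_primitive hii (t₀+1)).neg
          refine this.congr fun δ => ?_
          exact (intervalIntegral.integral_symm _ _).symm
        exact c1.add c2
      have := hc.tendsto 0
      simp only [neg_zero] at this
      rw [intervalIntegral.integral_add_adjacent_intervals (hgc.intervalIntegrable _ _)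
        (hgc.intervalIntegrable _ _)] at this
      exact this.mono_left nhdsWithin_le_nhds
    refine hlim.congr' ?_
    filter_upwards [Ioo_mem_nhdsGT (show (0:ℝ) < 1/4 by norm_num)] with δ hδ
    obtain ⟨d0, d1⟩ := hδ
    have hκc := kap_cont κ g c hper hgc hκ
    have hwc := ww_cont c
    have i1 := ii_of_cont κ hκc δ (t₀+1) d0 (by linarith) (by linarith) (by linarith)
    have i2 := ii_of_cont κ hκc (t₀+1) (1-δ) (by linarith) (by linarith) (by linarith) (by linarith)
    have j1 := ii_of_cont (ww c) hwc δ (t₀+1) d0 (by linarith) (by linarith) (by linarith)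
    have j2 := ii_of_cont (ww c) hwc (t₀+1) (1-δ) (by linarith) (by linarith) (by linarith) (by linarith)
    have k1 : ∫ t in δ..(t₀+1), κ t = (∫ t in δ..(t₀+1), ww c t) + ∫ t in δ..(t₀+1), g t := by
      rw [← intervalIntegral.integral_add j1 (hgc.intervalIntegrable _ _)]
      apply intervalIntegral.integral_congr
      intro t ht
      rw [Set.uIcc_of_le (by linarith)] at ht
      exact hκ t (by linarith [ht.1]) (by rw [abs_lt]; constructor <;> linarith [ht.1, ht.2])
    have k2 : ∫ t in (t₀+1)..(1-δ), κ t = (∫ t in (t₀+1)..(1-δ), ww c t) + ∫ t in t₀..(-δ), g t := by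
      have h3 : ∫ t in (t₀+1)..(1-δ), g (t - 1) = ∫ t in t₀..(-δ), g t := by
        rw [intervalIntegral.integral_comp_sub_right]
        congr 1 <;> ring
      rw [← h3, ← intervalIntegral.integral_add j2
        ((by fun_prop : Continuous fun t => g (t - 1)).intervalIntegrable _ _)]
      apply intervalIntegral.integral_congr
      intro s ht
      rw [Set.uIcc_of_le (by linarith)] at ht
      have h1 := hper (s - 1)
      have h2 := ww_per c (s - 1)
      rw [sub_add_cancel] at h1 h2
      simp only
      rw [h1, h2]
      exact hκ (s - 1) (by linarith [ht.2]) (by rw [abs_lt]; constructor <;> linarith [ht.1, ht.2])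
    have k3 := intervalIntegral.integral_add_adjacent_intervals i1 i2
    have k4 := intervalIntegral.integral_add_adjacent_intervals j1 j2
    rw [ww_int] at k4
    linarith
  · -- sums
    let x : ℕ → ℝ := fun j => ((j:ℝ) - m) / N
    have s1 : ∑ j ∈ Finset.range N, κ ((j:ℝ)/N) = ∑ j ∈ Finset.range N, g (x j) - g 0 := by
      have a1 := per_sum (fun t => κ t - ww c t) (fun t => by simp only [hper, ww_per]) N (by omega) m
      simp only [Finset.sum_sub_distrib] at a1
      rw [ww_sum c N (by omega), sub_zero, ← Finset.sum_sub_distrib] at a1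
      rw [← a1]
      have a2 : ∀ j ∈ Finset.range N, κ (((j:ℝ) - m) / N) - ww c (((j:ℝ) - m) / N)
          = g (x j) - if j = m then g 0 else 0 := by
        intro j hj
        rw [Finset.mem_range] at hj
        by_cases hjm : j = m
        · subst hjm
          simp [x, hκ0, ww, Real.cot_eq_cos_div_sin]
        · rw [if_neg hjm, sub_zero, hκ]
          · simp [x]
          · have : (j:ℝ) - m ≠ 0 := by
              rw [sub_ne_zero]; exact_mod_cast hjm
            exact div_ne_zero this hNpos.ne'
          · have hjN : (j:ℝ) + 1 ≤ N := by exact_mod_cast hj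
            have hj0 : (0:ℝ) ≤ j := by positivity
            rw [abs_lt]
            constructor
            · rw [lt_div_iff₀ hNpos]; linarith
            · rw [div_lt_iff₀ hNpos]; linarith
      rw [Finset.sum_congr rfl a2, Finset.sum_sub_distrib, Finset.sum_ite_eq',
        if_pos (Finset.mem_range.mpr (by omega))]
    have x0 : x 0 = t₀ := by simp [x, ht₀]
    have xN : x N = t₀ + 1 := by simp only [x, ht₀]; field_simp; ring
    have xs : ∀ j, x (j+1) = x j + (N:ℝ)⁻¹ := by
      intro j; simp only [x]; push_cast; field_simp; ring
    have s2 : ∑ j ∈ Finset.range N, ∫ t in (x j)..(x (j+1)), g t = ∫ t in t₀..(t₀+1), g t := by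
      rw [intervalIntegral.sum_integral_adjacent_intervals
        (fun k _ => hgc.intervalIntegrable _ _), x0, xN]
    have s3 : ∑ j ∈ Finset.range N, (g (x (j+1)) - g (x j)) = 0 := by
      rw [Finset.sum_range_sub (fun j => g (x j)), x0, xN, hgv, sub_self]
    have s4 : ∑ j ∈ Finset.range N, (deriv g (x (j+1)) - deriv g (x j)) = 0 := by
      rw [Finset.sum_range_sub (fun j => deriv g (x j)), x0, xN, hgd, sub_self]
    have s5 : (∫ t in t₀..(t₀+1), g t) - (N:ℝ)⁻¹ * ∑ j ∈ Finset.range N, g (x j)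
        = ∑ j ∈ Finset.range N, ((∫ t in (x j)..(x j + (N:ℝ)⁻¹), g t)
          - (N:ℝ)⁻¹ * (g (x j) + g (x j + (N:ℝ)⁻¹)) / 2
          + (N:ℝ)⁻¹^2/12 * (deriv g (x j + (N:ℝ)⁻¹) - deriv g (x j))) := by
      simp only [← xs]
      rw [Finset.sum_add_distrib, ← Finset.mul_sum, s4, mul_zero, add_zero, Finset.sum_sub_distrib, s2]
      congr 1
      have : ∀ j, (N:ℝ)⁻¹ * (g (x j) + g (x (j+1))) / 2
          = (N:ℝ)⁻¹ * g (x j) + (N:ℝ)⁻¹ / 2 * (g (x (j+1)) - g (x j)) := by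
        intro j; ring
      simp only [this]
      rw [Finset.sum_add_distrib, ← Finset.mul_sum, ← Finset.mul_sum, s3]
      ring
    rw [s1]
    have s6 : (∫ t in t₀..(t₀+1), g t) - ((N:ℝ)⁻¹ * (∑ j ∈ Finset.range N, g (x j) - g 0) + (N:ℝ)⁻¹ * g 0)
      = (∫ t in t₀..(t₀+1), g t) - (N:ℝ)⁻¹ * ∑ j ∈ Finset.range N, g (x j) := by ring
    rw [s6, s5]
    refine (Finset.abs_sum_le_sum_abs _ _).trans ?_
    calc _ ≤ ∑ j ∈ Finset.range N, M * (N:ℝ)⁻¹ ^ 5 :=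
          Finset.sum_le_sum fun j _ => cell g M hg hM _ _ (by positivity)
      _ = M * (N:ℝ)⁻¹ ^ 4 := by
          simp only [Finset.sum_const, Finset.card_range, nsmul_eq_mul]
          field_simp

theorem stmt_12 (L m₁ m₂ : ℝ) (hL : 0 < L) (hm₁ : 0 < m₁) (hm₂ : 0 < m₂) :
    ∃ C : ℝ, 0 < C ∧
      ∀ N : ℕ, 2 ≤ N →
        ∀ φ : ℝ → ℝ, ContDiff ℝ 6 φ →
          (∀ α : ℝ, φ (α + 1) = φ α - L) →
          (∀ α : ℝ, deriv φ α ≤ -m₁) →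
          (∀ k : ℕ, 1 ≤ k → k ≤ 6 → ∀ α : ℝ, |iteratedDeriv k φ α| ≤ m₂) →
          ∀ i₀ : ℕ, 1 ≤ i₀ → i₀ ≤ N - 1 →
            ∃ P R : ℝ,
              Tendsto (fun δ : ℝ =>
                  (∫ β in (0:ℝ)..((i₀:ℝ)/(N:ℝ) - δ),
                    (π / L) * Real.cot (π * (φ ((i₀:ℝ)/(N:ℝ)) - φ β) / L))
                  + ∫ β in ((i₀:ℝ)/(N:ℝ) + δ)..1,
                    (π / L) * Real.cot (π * (φ ((i₀:ℝ)/(N:ℝ)) - φ β) / L))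
                (𝓝[>] (0:ℝ)) (𝓝 P) ∧
              P = (∑ j ∈ (Finset.range N).erase i₀,
                    (N:ℝ)⁻¹ * (π / L) * Real.cot (π * (φ ((i₀:ℝ)/(N:ℝ)) - φ ((j:ℝ)/(N:ℝ))) / L))
                  + ((N:ℝ)⁻¹ / 2) * iteratedDeriv 2 φ ((i₀:ℝ)/(N:ℝ))
                      / (deriv φ ((i₀:ℝ)/(N:ℝ))) ^ 2
                  + R ∧
              |R| ≤ C * (N:ℝ)⁻¹ ^ 4 := by
  obtain ⟨M, hM0, hker⟩ := kernel L m₁ m₂ hL hm₁ hm₂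
  refine ⟨M + 1, by positivity, ?_⟩
  intro N hN φ hφ hper hder hbd i₀ hi1 hi2
  have hNpos : (0:ℝ) < N := by exact_mod_cast (by omega : 0 < N)
  set A : ℝ := (i₀:ℝ)/(N:ℝ) with hA
  have hA0 : 0 < A := by
    have : (0:ℝ) < i₀ := by exact_mod_cast hi1
    positivity
  have hA1 : A < 1 := by
    rw [hA, div_lt_one hNpos]
    exact_mod_cast (by omega : i₀ < N)
  obtain ⟨g, hg, hgM, hg0, hgκ⟩ := hker φ hφ hper hder hbd A
  set K : ℝ → ℝ := fun β => (π / L) * Real.cot (π * (φ A - φ β) / L) with hK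
  set κ : ℝ → ℝ := fun t => K (A + t) with hκdef
  have hκper : ∀ t, κ (t + 1) = κ t := by
    intro t
    simp only [hκdef, hK]
    rw [← add_assoc, hper, Real.cot_eq_cos_div_sin, Real.cot_eq_cos_div_sin]
    have : π * (φ A - (φ (A + t) - L)) / L = π * (φ A - φ (A + t)) / L + π := by
      field_simp; ring
    rw [this, Real.cos_add_pi, Real.sin_add_pi, neg_div_neg_eq]
  have hκ0 : κ 0 = 0 := by simp [hκdef, hK, Real.cot_eq_cos_div_sin]
  have hκw : ∀ t, t ≠ 0 → |t| < 3/4 → κ t = ww (-1 / deriv φ A) t + g t := hgκ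
  obtain ⟨P, hP, hR⟩ := quad N hN κ g _ M hκper hκ0 hg hgM hκw
  have hsum : ∑ j ∈ (Finset.range N).erase i₀,
        (N:ℝ)⁻¹ * (π / L) * Real.cot (π * (φ A - φ ((j:ℝ)/(N:ℝ))) / L)
      = (N:ℝ)⁻¹ * ∑ j ∈ Finset.range N, κ ((j:ℝ)/N) := by
    rw [← per_sum κ hκper N (by omega) i₀, Finset.mul_sum,
      ← Finset.add_sum_erase _ _ (Finset.mem_range.mpr (by omega : i₀ < N))]
    rw [sub_self, zero_div, hκ0, mul_zero, zero_add]
    apply Finset.sum_congr rfl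
    intro j _
    have : A + ((j:ℝ) - i₀) / N = (j:ℝ) / N := by rw [hA]; field_simp; ring
    simp only [hκdef, hK, this]
    ring
  refine ⟨P, P - ((N:ℝ)⁻¹ * ∑ j ∈ Finset.range N, κ ((j:ℝ)/N) + (N:ℝ)⁻¹ * g 0), ?_, ?_, ?_⟩
  · refine hP.congr' ?_
    filter_upwards [Ioo_mem_nhdsGT (show (0:ℝ) < 1 by norm_num)] with δ hδ
    obtain ⟨d0, d1⟩ := hδ
    have hc := kap_cont κ g _ hκper hg.continuous hκw
    have e1 : ∫ β in (0:ℝ)..(A - δ), K β = ∫ t in (1 - A)..(1 - δ), κ t := by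
      have h1 : ∫ t in (1 - A)..(1 - δ), K (A + (t - 1)) = ∫ β in (0:ℝ)..(A - δ), K β := by
        have := intervalIntegral.integral_comp_add_right (a := 1 - A) (b := 1 - δ) K (A - 1)
        rw [show 1 - A + (A - 1) = 0 by ring, show 1 - δ + (A - 1) = A - δ by ring] at this
        rw [← this]
        congr 1; ext t; congr 1; ring
      rw [← h1]
      congr 1; ext t
      have := hκper (t - 1)
      rw [sub_add_cancel] at this
      exact this.symm
    have e2 : ∫ β in (A + δ)..1, K β = ∫ t in δ..(1 - A), κ t := by
      have := intervalIntegral.integral_comp_add_left (a := δ) (b := 1 - A) K A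
      rw [show A + (1 - A) = 1 by ring] at this
      exact this.symm
    change _ = (∫ β in (0:ℝ)..(A - δ), K β) + ∫ β in (A + δ)..1, K β
    rw [e1, e2, add_comm, intervalIntegral.integral_add_adjacent_intervals]
    · exact ii_of_cont κ hc _ _ d0 d1 (by linarith) (by linarith)
    · exact ii_of_cont κ hc _ _ (by linarith) (by linarith) (by linarith) (by linarith)
  · rw [hsum, hg0]; ring
  · refine hR.trans ?_
    gcongr
    linarith
end

section
/- Let L > 0, N ∈ ℕ with N ≥ 2, a := 1/N, m₁, m₂ > 0. Let h : ℝ → ℝ be C⁶ with h′ < 0 and h(x+L) = h(x) − 1, and let φ be its inverse function, assumed to satisfy φ′(α) ≤ −m₁ < 0 and |φ^{(k)}(α)| ≤ m₂ for 1 ≤ k ≤ 6. Then there is a constant C = C(m₁, m₂, L) such that for every grid index i₀ ∈ {1, …, N−1}, with α* := i₀/N: −(2πa/L²)·Σ_{j=0, j≠i₀}^{N−1} cot(π(φ(j/N)−φ(α*))/L) = −(2π/L)·(H h′)(φ(α*)) + v₁(α*)·a + R, where v₁(α) := −φ″(α)/(L·φ′(α)²) and |R| ≤ C·a⁴. (The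 left-hand side is the closed form of the misfit interaction term I₁ = −(2/L)·Σ_{j≠i₀} a/(φ_j − φ(α*)), summed symmetrically over all periodic images.) -/
open Real Filter Topology MeasureTheory

/-- The first-order coefficient `v₁(α) = −φ″(α)/(L·φ′(α)²)`. -/
noncomputable def v1coef (L : ℝ) (φ : ℝ → ℝ) (α : ℝ) : ℝ :=
  -(iteratedDeriv 2 φ α) / (L * (deriv φ α) ^ 2)


lemma trap (N : ℕ) (hN : 0 < N) : ∀ n : ℕ, ∀ f : ℝ → ℝ, ContDiff ℝ n f → Function.Periodic f 1 →
    ∀ M : ℝ, (∀ x, |iteratedDeriv n f x| ≤ M) → ∀ x,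
    |(N:ℝ)⁻¹ * ∑ j ∈ Finset.range N, f (x + j / N) - ∫ t in (0:ℝ)..1, f t| ≤ 2 * M * (N:ℝ)⁻¹ ^ n := by
  have hN' : (0:ℝ) < N := by exact_mod_cast hN
  intro n
  induction n with
  | zero =>
    intro f hf hp M hM x
    simp only [iteratedDeriv_zero] at hM
    have h1 : |∫ t in (0:ℝ)..1, f t| ≤ M := by
      have := intervalIntegral.norm_integral_le_of_norm_le_const (a := (0:ℝ)) (b := 1) (f := f) (C := M)
        (fun t _ => hM t)
      simpa using this
    have h2 : |(N:ℝ)⁻¹ * ∑ j ∈ Finset.range N, f (x + j / N)| ≤ M := by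
      rw [abs_mul, abs_of_pos (inv_pos.2 hN')]
      have : |∑ j ∈ Finset.range N, f (x + j / N)| ≤ ∑ j ∈ Finset.range N, M :=
        (Finset.abs_sum_le_sum_abs _ _).trans (Finset.sum_le_sum fun j _ => hM _)
      simp at this
      rw [inv_mul_le_iff₀ hN']; exact this
    have := abs_sub (((N:ℝ)⁻¹ * ∑ j ∈ Finset.range N, f (x + j / N))) (∫ t in (0:ℝ)..1, f t)
    simp only [pow_zero]; linarith
  | succ n ih =>
    intro f hf hp M hM x
    have hf' := hf
    rw [show ((n+1:ℕ) : WithTop ℕ∞) = (n:WithTop ℕ∞) + 1 by push_cast; rfl] at hf'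
    obtain ⟨hd, -, hc⟩ := contDiff_succ_iff_deriv.1 hf'
    have hfc : Continuous f := hd.continuous
    have hpd : Function.Periodic (deriv f) 1 := by
      intro y
      have : (fun z => f (z + 1)) = f := funext hp
      rw [← deriv_comp_add_const, this]
    have h0 : ∫ t in (0:ℝ)..1, deriv f t = 0 := by
      rw [intervalIntegral.integral_deriv_eq_sub (fun y _ => hd y) (hc.continuous.intervalIntegrable _ _)]
      have := hp 0; simp at this; linarith
    have IH := ih (deriv f) hc hpd M (fun y => by rw [← iteratedDeriv_succ']; exact hM y)
    rw [h0] at IH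
    simp only [sub_zero] at IH
    set B := 2 * M * (N:ℝ)⁻¹ ^ n
    set I := ∫ t in (0:ℝ)..1, f t
    let g : ℝ → ℝ := fun y => (N:ℝ)⁻¹ * ∑ j ∈ Finset.range N, f (y + j / N) - I
    have hg : ∀ y, HasDerivAt g ((N:ℝ)⁻¹ * ∑ j ∈ Finset.range N, deriv f (y + j / N)) y := by
      intro y
      apply HasDerivAt.sub_const
      apply HasDerivAt.const_mul
      apply HasDerivAt.fun_sum
      intro j _
      exact HasDerivAt.comp_add_const _ _ (hd _).hasDerivAt
    have hgc : Continuous g := continuous_iff_continuousAt.2 fun y => (hg y).continuousAt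
    have hlip : ∀ y z, |g y - g z| ≤ B * |y - z| := by
      intro y z
      have := Convex.norm_image_sub_le_of_norm_hasDerivWithin_le (f := g) (s := Set.univ) (C := B)
        (fun w _ => (hg w).hasDerivWithinAt) (fun w _ => IH w) convex_univ (Set.mem_univ z) (Set.mem_univ y)
      simpa using this
    have hint : ∫ y in x..(x + (N:ℝ)⁻¹), g y = 0 := by
      simp only [g]
      rw [intervalIntegral.integral_sub, intervalIntegral.integral_const_mul,
        intervalIntegral.integral_finsetSum]
      · have : ∀ j ∈ Finset.range N, ∫ y in x..(x + (N:ℝ)⁻¹), f (y + j / N) =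
            ∫ y in (fun k : ℕ => x + (k:ℝ) / N) j..(fun k : ℕ => x + (k:ℝ) / N) (j+1), f y := by
          intro j _
          rw [intervalIntegral.integral_comp_add_right]
          congr 1
          push_cast; field_simp; ring
        rw [Finset.sum_congr rfl this, intervalIntegral.sum_integral_adjacent_intervals
          (fun k _ => hfc.intervalIntegrable _ _)]
        have h3 := hp.intervalIntegral_add_eq x 0
        simp only [zero_add] at h3
        simp [div_self hN'.ne', h3, I]
      · intro j _
        exact (hfc.comp (by fun_prop)).intervalIntegrable _ _
      · exact Continuous.intervalIntegrable (by fun_prop) _ _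
      · exact Continuous.intervalIntegrable (by fun_prop) _ _
    have hB : 0 ≤ B := (abs_nonneg _).trans (IH 0)
    have h5 : |(N:ℝ)⁻¹ * g x| ≤ B * (N:ℝ)⁻¹ * (N:ℝ)⁻¹ := by
      have e : (N:ℝ)⁻¹ * g x = ∫ y in x..(x + (N:ℝ)⁻¹), (g x - g y) := by
        rw [intervalIntegral.integral_sub (by simp) (hgc.intervalIntegrable _ _), hint]
        simp
      rw [e]
      have := intervalIntegral.norm_integral_le_of_norm_le_const (a := x) (b := x + (N:ℝ)⁻¹)
        (f := fun y => g x - g y) (C := B * (N:ℝ)⁻¹) (by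
          intro y hy
          rw [Set.uIoc_of_le (by simp)] at hy
          refine (hlip x y).trans ?_
          gcongr
          rw [abs_sub_comm, abs_of_nonneg] <;> linarith [hy.1, hy.2])
      simpa [abs_of_pos hN'] using this
    rw [abs_mul, abs_of_pos (inv_pos.2 hN')] at h5
    have h6 : |g x| ≤ B * (N:ℝ)⁻¹ := by
      have hp : (0:ℝ) < (N:ℝ)⁻¹ := inv_pos.2 hN'
      nlinarith
    calc _ = |g x| := rfl
      _ ≤ _ := h6
      _ = _ := by simp only [B]; ring

lemma analytic_dslope {f : ℝ → ℝ} (hf : ∀ x, AnalyticAt ℝ f x) (x : ℝ) :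
    AnalyticAt ℝ (dslope f 0) x := by
  rcases eq_or_ne x 0 with rfl | hx
  · obtain ⟨p, hp⟩ := hf 0
    exact ⟨_, hp.has_fpower_series_dslope_fslope⟩
  · have h1 : AnalyticAt ℝ (fun y => (y - 0)⁻¹ • (f y - f 0)) x := by
      have h2 : AnalyticAt ℝ (fun y : ℝ => y - 0) x := by fun_prop
      exact (h2.inv (by simpa using hx)).smul ((hf x).sub analyticAt_const)
    exact h1.congr (dslope_eventuallyEq_slope_of_ne f hx).symm

noncomputable def kS : ℝ → ℝ := dslope Real.sin 0
noncomputable def kU : ℝ → ℝ := fun x => Real.cos x - kS x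
noncomputable def kT : ℝ → ℝ := dslope kU 0
noncomputable def kk : ℝ → ℝ := fun x => kT x / kS x

lemma kS_an (x : ℝ) : AnalyticAt ℝ kS x := analytic_dslope (fun _ => Real.analyticAt_sin) x
lemma kU_an (x : ℝ) : AnalyticAt ℝ kU x := Real.analyticAt_cos.sub (kS_an x)
lemma kT_an (x : ℝ) : AnalyticAt ℝ kT x := analytic_dslope kU_an x

lemma kS_zero : kS 0 = 1 := by simp [kS]
lemma kS_of_ne {x : ℝ} (hx : x ≠ 0) : kS x = Real.sin x / x := by
  rw [kS, dslope_of_ne _ hx, slope_def_field]; simp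
lemma kT_of_ne {x : ℝ} (hx : x ≠ 0) : kT x = (Real.cos x - Real.sin x / x) / x := by
  rw [kT, dslope_of_ne _ hx, slope_def_field]; simp [kU, kS_zero, kS_of_ne hx]
lemma kU_even (x : ℝ) : kU (-x) = kU x := by
  rcases eq_or_ne x 0 with rfl | hx
  · simp
  · simp [kU, kS_of_ne hx, kS_of_ne (neg_ne_zero.2 hx)]
lemma kT_zero : kT 0 = 0 := by
  rw [kT, dslope_same]
  have h := deriv_comp_neg kU 0
  have : (fun x => kU (-x)) = kU := funext kU_even
  rw [this] at h
  simp at h; linarith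
lemma kk_zero : kk 0 = 0 := by simp [kk, kT_zero]
lemma sin_ne {x : ℝ} (hx : x ≠ 0) (h : |x| < π) : Real.sin x ≠ 0 := by
  obtain ⟨h1, h2⟩ := abs_lt.1 h
  rcases lt_or_gt_of_ne hx with h3 | h3
  · exact (Real.sin_neg_of_neg_of_neg_pi_lt h3 h1).ne
  · exact (Real.sin_pos_of_pos_of_lt_pi h3 h2).ne'
lemma kS_ne {x : ℝ} (h : |x| < π) : kS x ≠ 0 := by
  rcases eq_or_ne x 0 with rfl | hx
  · simp [kS_zero]
  · rw [kS_of_ne hx]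
    exact div_ne_zero (sin_ne hx h) hx
lemma kk_an {x : ℝ} (h : |x| < π) : AnalyticAt ℝ kk x := (kT_an x).div (kS_an x) (kS_ne h)
lemma cot_eq_kk {x : ℝ} (hx : x ≠ 0) (h : |x| < π) : Real.cot x = 1 / x + kk x := by
  have := sin_ne hx h
  rw [kk, kT_of_ne hx, kS_of_ne hx, Real.cot_eq_cos_div_sin]
  field_simp
  ring

lemma cot_add_int_pi (x : ℝ) (n : ℤ) : Real.cot (x + n * π) = Real.cot x := by
  rw [← Real.tan_inv_eq_cot, ← Real.tan_inv_eq_cot, Real.tan_periodic.int_mul n x]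

lemma cot_neg' (x : ℝ) : Real.cot (-x) = - Real.cot x := by
  rw [← Real.tan_inv_eq_cot, ← Real.tan_inv_eq_cot, Real.tan_neg, inv_neg]

lemma cot_sum (N i₀ : ℕ) (hi : i₀ < N) :
    ∑ j ∈ (Finset.range N).erase i₀, Real.cot (π * (((j:ℝ) - i₀) / N)) = 0 := by
  have hN : (N:ℝ) ≠ 0 := by have : 0 < N := by omega
                            positivity
  have key : ∀ j, j < N → (2 * i₀ + N - (2 * i₀ + N - j) % N) % N = j := by
    intro j hj
    have h1 := Nat.div_add_mod (2 * i₀ + N - j) N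
    have h2 := Nat.mod_lt (2 * i₀ + N - j) (show 0 < N by omega)
    have : 2 * i₀ + N - (2 * i₀ + N - j) % N = j + N * ((2 * i₀ + N - j) / N) := by omega
    rw [this, Nat.add_mul_mod_self_left, Nat.mod_eq_of_lt hj]
  have key2 : (2 * i₀ + N - i₀) % N = i₀ := by
    rw [show 2 * i₀ + N - i₀ = i₀ + N by omega, Nat.add_mod_right, Nat.mod_eq_of_lt hi]
  have maps : ∀ j ∈ (Finset.range N).erase i₀, (2 * i₀ + N - j) % N ∈ (Finset.range N).erase i₀ := by
    intro j hj
    simp only [Finset.mem_erase, Finset.mem_range] at hj ⊢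
    refine ⟨fun h => hj.1 ?_, Nat.mod_lt _ (by omega)⟩
    have := key j hj.2
    rw [h, key2] at this
    exact this.symm
  have : ∑ j ∈ (Finset.range N).erase i₀, Real.cot (π * (((j:ℝ) - i₀) / N)) =
      ∑ j ∈ (Finset.range N).erase i₀, - Real.cot (π * (((j:ℝ) - i₀) / N)) := by
    refine Finset.sum_nbij' (fun j => (2 * i₀ + N - j) % N) (fun j => (2 * i₀ + N - j) % N) maps maps
      ?_ ?_ ?_
    · intro j hj; exact key j (by simp at hj; exact hj.2)
    · intro j hj; exact key j (by simp at hj; exact hj.2)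
    · intro j hj
      simp only [Finset.mem_erase, Finset.mem_range] at hj
      rw [← cot_neg']
      have h1 := Nat.div_add_mod (2 * i₀ + N - j) N
      set m := (2 * i₀ + N - j) % N
      set d := (2 * i₀ + N - j) / N
      have h2 : N * d + m + j = 2 * i₀ + N := by omega
      have h3 : (N:ℝ) * d + m + j = 2 * i₀ + N := by exact_mod_cast h2
      rw [← cot_add_int_pi (-(π * (((m:ℝ) - i₀) / N))) (1 - (d:ℤ))]
      congr 1
      push_cast
      have : (m:ℝ) = 2 * i₀ + N - N * d - j := by linarith
      rw [this]; field_simp; ring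
  rw [Finset.sum_neg_distrib] at this
  linarith

lemma param_deriv (w ψ : ℝ → ℝ) (hw : Continuous w) (hψ : ContDiff ℝ 1 ψ) (α : ℝ) (β : ℝ) :
    HasDerivAt (fun β => ∫ t in (0:ℝ)..1, w t * ψ (α + t * β))
      (∫ t in (0:ℝ)..1, (w t * t) * deriv ψ (α + t * β)) β := by
  have hd : Differentiable ℝ ψ := hψ.differentiable (by norm_num)
  have hc : Continuous (deriv ψ) := hψ.continuous_deriv (by norm_num)
  have hψc : Continuous ψ := hψ.continuous
  obtain ⟨B, hB⟩ := (isCompact_Icc (a := (0:ℝ)) (b := 1) |>.prod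
    (isCompact_closedBall β 1)).exists_bound_of_continuousOn
    (f := fun p : ℝ × ℝ => (w p.1 * p.1) * deriv ψ (α + p.1 * p.2)) (by fun_prop)
  refine (intervalIntegral.hasDerivAt_integral_of_dominated_loc_of_deriv_le (𝕜 := ℝ)
    (F := fun β t => w t * ψ (α + t * β)) (F' := fun β t => (w t * t) * deriv ψ (α + t * β))
    (bound := fun _ => B) (Metric.ball_mem_nhds β one_pos) ?_ ?_ ?_ ?_ ?_ ?_).2
  · exact Eventually.of_forall fun x => Continuous.aestronglyMeasurable (by fun_prop)
  · exact Continuous.intervalIntegrable (by fun_prop) _ _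
  · exact Continuous.aestronglyMeasurable (by fun_prop)
  · refine Eventually.of_forall fun t ht x hx => ?_
    rw [Set.uIoc_of_le zero_le_one] at ht
    exact hB (t, x) ⟨⟨ht.1.le, ht.2⟩, Metric.ball_subset_closedBall hx⟩
  · simp
  · refine Eventually.of_forall fun t ht x hx => ?_
    have h1 : HasDerivAt (fun x => α + t * x) t x := by
      simpa using ((hasDerivAt_id x).const_mul t).const_add α
    have := ((hd (α + t * x)).hasDerivAt.comp x h1).const_mul (w t)
    exact this.congr_deriv (by ring)

lemma param_contDiff (α : ℝ) : ∀ n : ℕ, ∀ w ψ : ℝ → ℝ, Continuous w → ContDiff ℝ n ψ →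
    ContDiff ℝ n (fun β => ∫ t in (0:ℝ)..1, w t * ψ (α + t * β)) := by
  intro n
  induction n with
  | zero =>
    intro w ψ hw hψ
    have hψc : Continuous ψ := hψ.continuous
    exact contDiff_zero.2 (intervalIntegral.continuous_parametric_intervalIntegral_of_continuous'
      (by fun_prop) _ _)
  | succ n ih =>
    intro w ψ hw hψ
    have hψ1 : ContDiff ℝ 1 ψ := hψ.of_le (by exact_mod_cast Nat.le_add_left 1 n)
    rw [show ((n+1:ℕ) : WithTop ℕ∞) = (n:WithTop ℕ∞) + 1 by push_cast; rfl] at hψ ⊢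
    rw [contDiff_succ_iff_deriv] at hψ ⊢
    refine ⟨fun β => (param_deriv w ψ hw hψ1 α β).differentiableAt, by simp, ?_⟩
    have : deriv (fun β => ∫ t in (0:ℝ)..1, w t * ψ (α + t * β)) =
        fun β => ∫ t in (0:ℝ)..1, (w t * t) * deriv ψ (α + t * β) :=
      funext fun β => (param_deriv w ψ hw hψ1 α β).deriv
    rw [this]
    exact ih _ _ (by fun_prop) hψ.2.2

lemma param_bound (α : ℝ) (M : ℝ) : ∀ n : ℕ, ∀ w ψ : ℝ → ℝ, Continuous w →
    (∀ t ∈ Set.Icc (0:ℝ) 1, |w t| ≤ 1) → ContDiff ℝ n ψ → (∀ x, |iteratedDeriv n ψ x| ≤ M) →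
    ∀ β, |iteratedDeriv n (fun β => ∫ t in (0:ℝ)..1, w t * ψ (α + t * β)) β| ≤ M := by
  intro n
  induction n with
  | zero =>
    intro w ψ hw hw1 hψ hM β
    simp only [iteratedDeriv_zero] at hM ⊢
    have := intervalIntegral.norm_integral_le_of_norm_le_const (a := (0:ℝ)) (b := 1)
      (f := fun t => w t * ψ (α + t * β)) (C := M) (by
        intro t ht
        rw [Set.uIoc_of_le zero_le_one] at ht
        rw [Real.norm_eq_abs, abs_mul]
        have h1 := hw1 t ⟨ht.1.le, ht.2⟩
        have h2 := hM (α + t * β)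
        nlinarith [abs_nonneg (w t), abs_nonneg (ψ (α + t * β))])
    simpa using this
  | succ n ih =>
    intro w ψ hw hw1 hψ hM β
    have hψ1 : ContDiff ℝ 1 ψ := hψ.of_le (by exact_mod_cast Nat.le_add_left 1 n)
    rw [show ((n+1:ℕ) : WithTop ℕ∞) = (n:WithTop ℕ∞) + 1 by push_cast; rfl] at hψ
    rw [contDiff_succ_iff_deriv] at hψ
    have : deriv (fun β => ∫ t in (0:ℝ)..1, w t * ψ (α + t * β)) =
        fun β => ∫ t in (0:ℝ)..1, (w t * t) * deriv ψ (α + t * β) :=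
      funext fun β => (param_deriv w ψ hw hψ1 α β).deriv
    rw [iteratedDeriv_succ', this]
    refine ih _ _ (by fun_prop) ?_ hψ.2.2 (fun x => by rw [← iteratedDeriv_succ']; exact hM x) β
    intro t ht
    rw [abs_mul, abs_of_nonneg ht.1]
    have := hw1 t ht
    nlinarith [ht.1, ht.2, abs_nonneg (w t)]

lemma comp_bound {E : Type*} [NormedAddCommGroup E] [NormedSpace ℝ E] (g : E → ℝ) (K : Set E)
    (hK : IsCompact K) (hg : ∀ y ∈ K, ContDiffAt ℝ 4 g y) (D : ℝ) :
    ∃ C, ∀ f : ℝ → E, ContDiff ℝ 4 f → ∀ x, f x ∈ K →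
      (∀ i, 1 ≤ i → i ≤ 4 → ‖iteratedFDeriv ℝ i f x‖ ≤ D ^ i) →
      |iteratedDeriv 4 (g ∘ f) x| ≤ C := by
  have h1 : ∀ i : ℕ, i ≤ 4 → ∃ C, ∀ y ∈ K, ‖iteratedFDeriv ℝ i g y‖ ≤ C := by
    intro i hi
    apply hK.exists_bound_of_continuousOn
    intro y hy
    exact ((hg y hy).continuousAt_iteratedFDeriv (by exact_mod_cast hi)).continuousWithinAt
  choose! c hc using h1
  let C := ∑ i ∈ Finset.range 5, |c i|
  have hC : ∀ i ≤ 4, ∀ y ∈ K, ‖iteratedFDeriv ℝ i g y‖ ≤ C := by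
    intro i hi y hy
    refine (hc i hi y hy).trans ((le_abs_self _).trans ?_)
    exact Finset.single_le_sum (f := fun i => |c i|) (fun _ _ => abs_nonneg _)
      (Finset.mem_range.2 (by omega))
  refine ⟨(Nat.factorial 4) * C * D ^ 4, ?_⟩
  intro f hf x hx hD
  let t : Set E := {y | ContDiffAt ℝ 4 g y}
  have ht : IsOpen t := isOpen_iff_mem_nhds.2 fun y hy => ContDiffAt.eventually hy (by simp)
  let s := f ⁻¹' t
  have hs : IsOpen s := ht.preimage hf.continuous
  have hxs : x ∈ s := hg _ hx
  have := norm_iteratedFDerivWithin_comp_le (𝕜 := ℝ) (n := 4) (N := 4) (g := g) (f := f) (s := s) (t := t)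
    (x := x) (C := C) (D := D)
    (fun y hy => ContDiffAt.contDiffWithinAt hy) hf.contDiffOn (by norm_num) ht.uniqueDiffOn hs.uniqueDiffOn
    (fun y hy => hy) hxs
    (fun i hi => by
      rw [iteratedFDerivWithin_of_isOpen i ht (hg _ hx)]; exact hC i hi _ hx)
    (fun i h1 hi => by
      rw [iteratedFDerivWithin_of_isOpen i hs hxs]; exact hD i h1 hi)
  rw [iteratedFDerivWithin_of_isOpen 4 hs hxs, norm_iteratedFDeriv_eq_norm_iteratedDeriv] at this
  exact this

noncomputable def Psi (L : ℝ) : ℝ × ℝ × ℝ → ℝ := fun y =>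
  -(L / π) * (y.2.1 / ((y.2.2 + y.1 * y.2.1) * y.2.2)) + kk (π * (y.1 * (y.2.2 + y.1 * y.2.1)) / L)
    - (L / y.2.2) * kk (π * y.1)

lemma Psi_smooth (L : ℝ) (hL : 0 < L) (y : ℝ × ℝ × ℝ) (hp : y.2.2 ≠ 0) (hq : y.2.2 + y.1 * y.2.1 ≠ 0)
    (hu : |y.1 * (y.2.2 + y.1 * y.2.1)| < L) (hb : |y.1| < 1) : ContDiffAt ℝ 4 (Psi L) y := by
  have h1 : |π * (y.1 * (y.2.2 + y.1 * y.2.1)) / L| < π := by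
    rw [abs_div, abs_mul, abs_of_pos pi_pos, abs_of_pos hL, div_lt_iff₀ hL]
    exact mul_lt_mul_of_pos_left hu pi_pos
  have h2 : |π * y.1| < π := by
    rw [abs_mul, abs_of_pos pi_pos]
    nlinarith [pi_pos]
  have k1 : ContDiffAt ℝ 4 kk (π * (y.1 * (y.2.2 + y.1 * y.2.1)) / L) := (kk_an h1).contDiffAt
  have k2 : ContDiffAt ℝ 4 kk (π * y.1) := (kk_an h2).contDiffAt
  unfold Psi
  refine ContDiffAt.sub (ContDiffAt.add ?_ ?_) ?_
  · refine contDiffAt_const.mul (ContDiffAt.div (by fun_prop) (by fun_prop) (mul_ne_zero hq hp))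
  · exact k1.comp y (f := fun y : ℝ × ℝ × ℝ => π * (y.1 * (y.2.2 + y.1 * y.2.1)) / L) (by fun_prop)
  · refine ContDiffAt.mul (ContDiffAt.div (by fun_prop) (by fun_prop) hp) ?_
    exact k2.comp y (f := fun y : ℝ × ℝ × ℝ => π * y.1) (by fun_prop)

def KK (L m₁ m₂ : ℝ) : Set (ℝ × ℝ × ℝ) :=
  (Set.Icc (-(1/2)) (1/2) ×ˢ (Set.Icc (-m₂) m₂ ×ˢ Set.Icc (-m₂) (-m₁))) ∩
    {y | y.2.2 + y.1 * y.2.1 ≤ -m₁ ∧ |y.1 * (y.2.2 + y.1 * y.2.1)| ≤ L - m₁ / 2}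

lemma KK_compact (L m₁ m₂ : ℝ) : IsCompact (KK L m₁ m₂) := by
  apply IsCompact.inter_right
  · exact isCompact_Icc.prod (isCompact_Icc.prod isCompact_Icc)
  · have c1 : Continuous fun y : ℝ × ℝ × ℝ => y.2.2 + y.1 * y.2.1 := by fun_prop
    have c2 : Continuous fun y : ℝ × ℝ × ℝ => |y.1 * (y.2.2 + y.1 * y.2.1)| := by fun_prop
    exact (isClosed_le c1 continuous_const).inter (isClosed_le c2 continuous_const)

lemma KK_smooth (L m₁ m₂ : ℝ) (hL : 0 < L) (hm₁ : 0 < m₁) :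
    ∀ y ∈ KK L m₁ m₂, ContDiffAt ℝ 4 (Psi L) y := by
  rintro ⟨b, r, p⟩ ⟨⟨h1, h2, h3⟩, h4, h5⟩
  simp only [Set.mem_Icc] at *
  apply Psi_smooth L hL
  · simp only; linarith
  · simp only; linarith
  · simp only; linarith
  · simp only; rw [abs_lt]; constructor <;> linarith

noncomputable def rr (φ : ℝ → ℝ) (α : ℝ) : ℝ → ℝ :=
  fun β => ∫ t in (0:ℝ)..1, (1 - t) * iteratedDeriv 2 φ (α + t * β)

lemma iter_add (φ : ℝ → ℝ) (i : ℕ) : iteratedDeriv i (iteratedDeriv 2 φ) = iteratedDeriv (i + 2) φ := by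
  simp only [iteratedDeriv_eq_iterate, Function.iterate_add_apply]

lemma iter_contDiff (φ : ℝ → ℝ) (hφ : ContDiff ℝ 6 φ) : ContDiff ℝ 4 (iteratedDeriv 2 φ) := by
  rw [iteratedDeriv_eq_iterate]
  exact ContDiff.iterate_deriv' 4 2 hφ

lemma rr_contDiff (φ : ℝ → ℝ) (hφ : ContDiff ℝ 6 φ) (α : ℝ) : ContDiff ℝ 4 (rr φ α) :=
  param_contDiff α 4 _ _ (by fun_prop) (iter_contDiff φ hφ)

lemma rr_bound (φ : ℝ → ℝ) (hφ : ContDiff ℝ 6 φ) (α m₂ : ℝ)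
    (hb : ∀ k : ℕ, 1 ≤ k → k ≤ 6 → ∀ α : ℝ, |iteratedDeriv k φ α| ≤ m₂) (i : ℕ) (hi : i ≤ 4) (β : ℝ) :
    |iteratedDeriv i (rr φ α) β| ≤ m₂ := by
  refine param_bound α m₂ i _ _ (by fun_prop) ?_ ((iter_contDiff φ hφ).of_le (by exact_mod_cast hi)) ?_ β
  · intro t ht
    rw [abs_le]; constructor <;> linarith [ht.1, ht.2]
  · intro x
    rw [iter_add]
    exact hb _ (by omega) (by omega) x

lemma rr_zero (φ : ℝ → ℝ) (α : ℝ) : rr φ α 0 = iteratedDeriv 2 φ α / 2 := by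
  simp only [rr, mul_zero, add_zero]
  rw [intervalIntegral.integral_mul_const, intervalIntegral.integral_sub (by simp) (by simp)]
  simp only [intervalIntegral.integral_const, integral_id]
  norm_num; ring

lemma rr_taylor (φ : ℝ → ℝ) (hφ : ContDiff ℝ 6 φ) (α β : ℝ) :
    φ (α + β) - φ α = β * (deriv φ α + β * rr φ α β) := by
  have hd : Differentiable ℝ φ := hφ.differentiable (by norm_num)
  have h1 : ContDiff ℝ 5 (deriv φ) := ContDiff.iterate_deriv' 5 1 hφ
  have hd1 : Differentiable ℝ (deriv φ) := h1.differentiable (by norm_num)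
  have h2 : Continuous (iteratedDeriv 2 φ) := (iter_contDiff φ hφ).continuous
  have e2 : iteratedDeriv 2 φ = deriv (deriv φ) := by
    simp [iteratedDeriv_eq_iterate]
  have hder : ∀ t : ℝ, HasDerivAt (fun t => (1 - t) * (β * deriv φ (α + t * β)) + φ (α + t * β))
      (β ^ 2 * ((1 - t) * iteratedDeriv 2 φ (α + t * β))) t := by
    intro t
    have g1 : HasDerivAt (fun t => α + t * β) β t := by
      simpa using ((hasDerivAt_id t).mul_const β).const_add α
    have g2 := (hd (α + t * β)).hasDerivAt.comp t g1
    have g3 := ((hd1 (α + t * β)).hasDerivAt.comp t g1).const_mul β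
    have g4 := (((hasDerivAt_id t).const_sub 1).mul g3).add g2
    refine g4.congr_deriv ?_
    rw [e2]; simp only [Function.comp, id]; ring
  have := intervalIntegral.integral_eq_sub_of_hasDerivAt (a := 0) (b := 1) (fun t _ => hder t)
    (Continuous.intervalIntegrable (by fun_prop) _ _)
  rw [intervalIntegral.integral_const_mul] at this
  have e : ∫ t in (0:ℝ)..1, (1 - t) * iteratedDeriv 2 φ (α + t * β) = rr φ α β := rfl
  rw [e] at this
  simp at this
  linarith

lemma G_exists (L m₁ m₂ : ℝ) (hL : 0 < L) (hm₁ : 0 < m₁) (hm₂ : 0 < m₂) :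
    ∃ M : ℝ, ∀ φ : ℝ → ℝ, ContDiff ℝ 6 φ → (∀ α, φ (α + 1) = φ α - L) →
      (∀ α : ℝ, deriv φ α ≤ -m₁) →
      (∀ k : ℕ, 1 ≤ k → k ≤ 6 → ∀ α : ℝ, |iteratedDeriv k φ α| ≤ m₂) → ∀ α : ℝ,
      ∃ G : ℝ → ℝ, ContDiff ℝ 4 G ∧ Function.Periodic G 1 ∧ (∀ x, |iteratedDeriv 4 G x| ≤ M) ∧
        (∀ β, Real.sin (π * β) ≠ 0 → Real.cot (π * (φ (α + β) - φ α) / L) =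
          G β + (L / deriv φ α) * Real.cot (π * β)) ∧
        G 0 = -(L / π) * (iteratedDeriv 2 φ α / 2 / (deriv φ α) ^ 2) := by
  obtain ⟨M, hM⟩ := comp_bound (Psi L) (KK L m₁ m₂) (KK_compact _ _ _) (KK_smooth L m₁ m₂ hL hm₁) (1 + m₂)
  refine ⟨M, fun φ hφ hper hd hb α => ?_⟩
  have hφd : Differentiable ℝ φ := hφ.differentiable (by norm_num)
  have hmv : ∀ x y, x ≤ y → φ y - φ x ≤ -m₁ * (y - x) := fun x y hxy =>
    image_sub_le_mul_sub_of_deriv_le hφd (fun z => hd z) hxy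
  set p := deriv φ α with hp
  have hp0 : p ≠ 0 := by have := hd α; intro h; rw [← hp, h] at this; linarith
  let f : ℝ → ℝ × ℝ × ℝ := fun β => (β, rr φ α β, p)
  have hrC := rr_contDiff φ hφ α
  have hf : ContDiff ℝ 4 f := by
    exact contDiff_id.prodMk (hrC.prodMk contDiff_const)
  have hpm : φ (α - 1) = φ α + L := by
    have := hper (α - 1); rw [sub_add_cancel] at this; linarith
  -- bounds for u
  have hu : ∀ β, |β| < 1 → |φ (α + β) - φ α| ≤ L - m₁ * (1 - |β|) := by
    intro β hβ
    rcases le_total 0 β with h | h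
    · rw [abs_of_nonneg h] at hβ ⊢
      have h1 := hmv α (α + β) (by linarith)
      have h2 := hmv (α + β) (α + 1) (by linarith)
      rw [hper] at h2
      rw [abs_le]; constructor <;> nlinarith
    · rw [abs_of_nonpos h] at hβ ⊢
      have h1 := hmv (α + β) α (by linarith)
      have h2 := hmv (α - 1) (α + β) (by linarith)
      rw [hpm] at h2
      rw [abs_le]; constructor <;> nlinarith
  have hq : ∀ β, p + β * rr φ α β ≤ -m₁ := by
    intro β
    have ht := rr_taylor φ hφ α β
    rcases lt_trichotomy β 0 with h | h | h
    · have h1 := hmv (α + β) α (by linarith)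
      by_contra hcon
      push Not at hcon
      nlinarith
    · rw [h]; simpa using hd α
    · have h1 := hmv α (α + β) (by linarith)
      by_contra hcon
      push Not at hcon
      nlinarith
  have hfK : ∀ β, |β| ≤ 1/2 → f β ∈ KK L m₁ m₂ := by
    intro β hβ
    refine ⟨⟨?_, ?_, ?_⟩, hq β, ?_⟩
    · exact abs_le.1 hβ
    · exact abs_le.1 (by simpa using rr_bound φ hφ α m₂ hb 0 (by norm_num) β)
    · have := hb 1 le_rfl (by norm_num) α
      rw [iteratedDeriv_one] at this
      exact ⟨(abs_le.1 this).1, hd α⟩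
    · show |β * (p + β * rr φ α β)| ≤ _
      rw [← rr_taylor φ hφ α β]
      refine (hu β (by linarith)).trans ?_
      nlinarith
  have hfd : ∀ x i, 1 ≤ i → i ≤ 4 → ‖iteratedFDeriv ℝ i f x‖ ≤ (1 + m₂) ^ i := by
    intro x i h1 h4
    have hpow : 1 + m₂ ≤ (1 + m₂) ^ i := le_self_pow₀ (by linarith) (by omega)
    have hi4 : (i : WithTop ℕ∞) ≤ 4 := by exact_mod_cast h4
    have hr' : ContDiffAt ℝ i (rr φ α) x := (hrC.of_le hi4).contDiffAt
    simp only [f]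
    rw [iteratedFDeriv_prodMk (n := i) (f := fun x : ℝ => x) contDiff_id.contDiffAt (hr'.prodMk contDiffAt_const) le_rfl,
      iteratedFDeriv_prodMk (n := i) hr' contDiffAt_const le_rfl,
      ContinuousMultilinearMap.opNorm_prod, ContinuousMultilinearMap.opNorm_prod]
    simp only [norm_iteratedFDeriv_eq_norm_iteratedDeriv]
    refine max_le ?_ (max_le ?_ ?_)
    · have : ‖iteratedDeriv i (fun x : ℝ => x) x‖ ≤ 1 := by
        rw [iteratedDeriv_fun_id]
        split_ifs <;> simp_all
      exact this.trans (by linarith)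
    · have := rr_bound φ hφ α m₂ hb i h4 x
      rw [Real.norm_eq_abs]; linarith
    · rw [iteratedDeriv_const]
      split_ifs
      · omega
      · simp; linarith
  let G : ℝ → ℝ := fun β => if Real.sin (π * β) = 0 then Psi L (f 0) else
    Real.cot (π * (φ (α + β) - φ α) / L) - (L / p) * Real.cot (π * β)
  have hGloc : ∀ β, |β| < 1 → G β = Psi L (f β) := by
    intro β hβ
    rcases eq_or_ne β 0 with rfl | h0
    · simp [G]
    have hpb : |π * β| < π := by
      rw [abs_mul, abs_of_pos pi_pos]; nlinarith [pi_pos]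
    have hpb0 : π * β ≠ 0 := mul_ne_zero pi_ne_zero h0
    have hs := sin_ne hpb0 hpb
    have hq0 : p + β * rr φ α β ≠ 0 := by have := hq β; intro h; linarith
    have hul : |φ (α + β) - φ α| < L := (hu β hβ).trans_lt (by nlinarith)
    simp only [G, if_neg hs]
    rw [rr_taylor φ hφ α β, ← hp] at hul ⊢
    rw [cot_eq_kk hpb0 hpb, cot_eq_kk]
    · simp only [Psi, f]
      field_simp
      ring
    · exact div_ne_zero (mul_ne_zero pi_ne_zero (mul_ne_zero h0 hq0)) hL.ne'
    · rw [abs_div, abs_mul, abs_of_pos pi_pos, abs_of_pos hL, div_lt_iff₀ hL]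
      exact mul_lt_mul_of_pos_left hul pi_pos
  have hGper : Function.Periodic G 1 := by
    intro β
    have e1 : π * (β + 1) = π * β + π := by ring
    have e2 : π * (φ (α + (β + 1)) - φ α) / L = π * (φ (α + β) - φ α) / L + ((-1:ℤ):ℝ) * π := by
      rw [← add_assoc, hper]; push_cast; field_simp; ring
    have e3 : Real.cot (π * β + π) = Real.cot (π * β) := by
      simpa using cot_add_int_pi (π * β) 1
    simp only [G]
    rw [e1, e2, e3, cot_add_int_pi, Real.sin_add_pi]
    simp
  have hGev : ∀ β, |β| < 1 → G =ᶠ[𝓝 β] (Psi L ∘ f) := by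
    intro β hβ
    have : {x : ℝ | |x| < 1} ∈ 𝓝 β := (isOpen_lt continuous_abs continuous_const).mem_nhds hβ
    filter_upwards [this] with x hx using hGloc x hx
  have hGsh : ∀ x : ℝ, G = fun y => G (y + (-((round x : ℤ) : ℝ))) := by
    intro x
    funext y
    have := (hGper.int_mul (-(round x))) y
    simp only [mul_one] at this
    push_cast at this
    exact this.symm
  have hround : ∀ x : ℝ, |x + (-((round x : ℤ) : ℝ))| ≤ 1/2 := fun x => by
    rw [← sub_eq_add_neg]; exact abs_sub_round x
  refine ⟨G, ?_, hGper, ?_, ?_, ?_⟩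
  · rw [contDiff_iff_contDiffAt]
    intro x
    rw [hGsh x]
    have h1 : ContDiffAt ℝ 4 G (x + (-((round x : ℤ) : ℝ))) := by
      refine ContDiffAt.congr_of_eventuallyEq ?_ (hGev _ (by linarith [hround x]))
      exact (KK_smooth L m₁ m₂ hL hm₁ _ (hfK _ (hround x))).comp _ hf.contDiffAt
    exact h1.comp x (f := fun y => y + (-((round x : ℤ) : ℝ))) (by fun_prop)
  · intro x
    rw [hGsh x, iteratedDeriv_comp_add_const]
    simp only
    rw [(hGev _ (by linarith [hround x])).iteratedDeriv_eq 4]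
    exact hM f hf _ (hfK _ (hround x)) (hfd _)
  · intro β hβ
    simp only [G, if_neg hβ]; ring
  · rw [hGloc 0 (by simp)]
    simp only [Psi, f, rr_zero, mul_zero, zero_mul, zero_div, kk_zero]
    ring

lemma log_lim (f : ℝ → ℝ) (c : ℝ) (hc : c ≠ 0) (h0 : f 0 = 0) (hf : HasDerivAt f c 0) :
    Tendsto (fun δ => Real.log (f δ / δ)) (𝓝[>] 0) (𝓝 (Real.log c)) := by
  have h := hasDerivAt_iff_tendsto_slope_zero.1 hf
  have h2 : Tendsto (fun δ => f δ / δ) (𝓝[>] 0) (𝓝 c) := by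
    refine (h.mono_left (nhdsWithin_mono _ (fun x hx => (ne_of_gt hx)))).congr ?_
    intro t; simp [h0]; ring
  exact h2.log hc

lemma pv_lim (L : ℝ) (hL : 0 < L) (h φ G : ℝ → ℝ) (p α : ℝ) (hh : ContDiff ℝ 6 h)
    (hneg : ∀ x, deriv h x < 0) (hper : ∀ x, h (x + L) = h x - 1) (hinv : ∀ α, h (φ α) = α)
    (hinv' : ∀ x, φ (h x) = x) (hG : Continuous G)
    (hGe : ∀ β, Real.sin (π * β) ≠ 0 → Real.cot (π * (φ (α + β) - φ α) / L) =
          G β + (L / p) * Real.cot (π * β)) :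
    Tendsto (fun δ : ℝ => ∫ s in δ..(L - δ), deriv h (φ α - s) * Real.cot (π * s / L))
      (𝓝[>] 0) (𝓝 (∫ t in (0:ℝ)..1, G t)) := by
  set x := φ α with hx
  have hd : Differentiable ℝ h := hh.differentiable (by norm_num)
  have hdc : Continuous (deriv h) := hh.continuous_deriv (by norm_num)
  have hanti : StrictAnti h := strictAnti_of_deriv_neg hneg
  have hxα : h x = α := hinv α
  let Γ : ℝ → ℝ := fun b => ∫ t in (0:ℝ)..b, G t
  have hΓ : ∀ b, HasDerivAt Γ (G b) b := fun b => hG.integral_hasStrictDerivAt 0 b |>.hasDerivAt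
  let B : ℝ → ℝ := fun s => h (x - s) - α
  have hB : ∀ s, HasDerivAt B (-deriv h (x - s)) s := by
    intro s
    have := ((hd (x - s)).hasDerivAt.comp s ((hasDerivAt_id s).const_sub x)).sub_const α
    exact this.congr_deriv (by simp)
  have hL1 : h (x - L) = α + 1 := by
    have := hper (x - L); rw [sub_add_cancel] at this; linarith
  have hB01 : ∀ s, 0 < s → s < L → 0 < B s ∧ B s < 1 := by
    intro s h1 h2
    have a1 := hanti (show x - s < x by linarith)
    have a2 := hanti (show x - L < x - s by linarith)
    simp only [B]; constructor <;> linarith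
  have hsinpos : ∀ s, 0 < s → s < L → 0 < Real.sin (π * B s) := by
    intro s h1 h2
    obtain ⟨b1, b2⟩ := hB01 s h1 h2
    exact Real.sin_pos_of_pos_of_lt_pi (by positivity) (by nlinarith [pi_pos])
  let A : ℝ → ℝ := fun s => Γ (B s) + L / (p * π) * Real.log (Real.sin (π * B s))
  have hA : ∀ s, 0 < s → s < L → HasDerivAt A (deriv h (x - s) * Real.cot (π * s / L)) s := by
    intro s h1 h2
    have hs := hsinpos s h1 h2
    have d1 := (hΓ (B s)).comp s (hB s)
    have d2 := ((((hB s).const_mul π).sin).log hs.ne').const_mul (L / (p * π))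
    refine (d1.add d2).congr_deriv ?_
    have e := hGe (B s) hs.ne'
    have e2 : φ (α + B s) - x = -s := by
      simp only [B]
      rw [show α + (h (x - s) - α) = h (x - s) by ring, hinv']; ring
    rw [e2, show π * -s / L = -(π * s / L) by ring, cot_neg'] at e
    have e3 : Real.cot (π * s / L) = -(G (B s) + L / p * Real.cot (π * B s)) := by linarith
    rw [e3, Real.cot_eq_cos_div_sin]
    have := pi_ne_zero
    rcases eq_or_ne p 0 with hp | hp
    · simp [hp]; ring
    · field_simp; ring
  have hsL : ∀ s, 0 < s → s < L → Real.sin (π * s / L) ≠ 0 := by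
    intro s h1 h2
    refine (Real.sin_pos_of_pos_of_lt_pi (by positivity) ?_).ne'
    rw [div_lt_iff₀ hL]; nlinarith [pi_pos]
  have hev : ∀ᶠ δ in 𝓝[>] (0:ℝ), 0 < δ ∧ δ < L / 2 := by
    have : Set.Ioo 0 (L/2) ∈ 𝓝[>] (0:ℝ) := Ioo_mem_nhdsGT (by linarith)
    filter_upwards [this] with δ hδ using hδ
  let X : ℝ → ℝ := fun δ => Real.sin (π * (α - h (x + δ)))
  let Y : ℝ → ℝ := fun δ => Real.sin (π * B δ)
  have hX : HasDerivAt X (-π * deriv h x) 0 := by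
    have d0 : HasDerivAt (fun δ => h (x + δ)) (deriv h x) 0 := by
      have := (hd (x + 0)).hasDerivAt.comp_const_add x 0
      simpa using this
    refine ((d0.const_sub α).const_mul π).sin.congr_deriv ?_
    simp [hxα]
  have hY : HasDerivAt Y (-π * deriv h x) 0 := by
    refine ((hB 0).const_mul π).sin.congr_deriv ?_
    simp [B, hxα]
  have hc : -π * deriv h x ≠ 0 := mul_ne_zero (neg_ne_zero.2 pi_ne_zero) (hneg x).ne
  have lX := log_lim X _ hc (by simp [X, hxα]) hX
  have lY := log_lim Y _ hc (by simp [Y, B, hxα]) hY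
  have hΓc : Continuous Γ := continuous_iff_continuousAt.2 fun b => (hΓ b).continuousAt
  have hBc : Continuous B := continuous_iff_continuousAt.2 fun b => (hB b).continuousAt
  have lG1 : Tendsto (fun δ => Γ (B (L - δ))) (𝓝[>] 0) (𝓝 (Γ 1)) := by
    have c : Continuous (fun δ => Γ (B (L - δ))) := by fun_prop
    have := c.tendsto 0
    have e : B (L - 0) = 1 := by simp [B, hL1]
    simp only [e] at this
    exact this.mono_left nhdsWithin_le_nhds
  have lG0 : Tendsto (fun δ => Γ (B δ)) (𝓝[>] 0) (𝓝 0) := by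
    have c : Continuous (fun δ => Γ (B δ)) := by fun_prop
    have := c.tendsto 0
    have e : Γ (B 0) = 0 := by simp [B, hxα, Γ]
    simp only [e] at this
    exact this.mono_left nhdsWithin_le_nhds
  have lim := (lG1.sub lG0).add ((lX.sub lY).const_mul (L / (p * π)))
  simp only [sub_self, mul_zero, add_zero, sub_zero] at lim
  refine lim.congr' ?_
  filter_upwards [hev] with δ hδ
  have hsub : ∀ s ∈ Set.uIcc δ (L - δ), 0 < s ∧ s < L := by
    intro s hs
    rw [Set.uIcc_of_le (by linarith [hδ.2])] at hs
    exact ⟨by linarith [hs.1, hδ.1], by linarith [hs.2, hδ.1]⟩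
  rw [intervalIntegral.integral_eq_sub_of_hasDerivAt (f := A)
    (fun s hs => hA s (hsub s hs).1 (hsub s hs).2)]
  · have hYp : 0 < Y δ := hsinpos δ hδ.1 (by linarith [hδ.2])
    have eX : X δ = Real.sin (π * B (L - δ)) := by
      have : h (x - (L - δ)) = h (x + δ) + 1 := by
        have := hper (x - (L - δ))
        rw [show x - (L - δ) + L = x + δ by ring] at this; linarith
      simp only [X, B, this]
      rw [← Real.sin_pi_sub]; congr 1; ring
    have hXp : 0 < X δ := by
      rw [eX]; exact hsinpos _ (by linarith [hδ.2]) (by linarith [hδ.1])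
    rw [Real.log_div hXp.ne' hδ.1.ne', Real.log_div hYp.ne' hδ.1.ne', eX]
    simp only [A, Y]
    ring
  · apply ContinuousOn.intervalIntegrable
    intro s hs
    have := hsL s (hsub s hs).1 (hsub s hs).2
    simp only [Real.cot_eq_cos_div_sin]
    apply ContinuousAt.continuousWithinAt
    apply ContinuousAt.mul (by fun_prop)
    exact ContinuousAt.div (by fun_prop) (by fun_prop) this

/-- Expansion of the misfit interaction term: for `h` a `C⁶` height profile
with `h′ < 0`, `h(x+L) = h(x) − 1`, inverse `φ` satisfying `φ′ ≤ −m₁ < 0`, `|φ^{(k)}| ≤ m₂`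
(`1 ≤ k ≤ 6`), and `Hh'` the `L`-periodic Hilbert transform of `h′` (principal-value
characterization `hH`), we have at every interior grid point `α* = i₀/N`:
`−(2πa/L²)·Σ_{j=0,j≠i₀}^{N−1} cot(π(φ(j/N)−φ(α*))/L)
  = −(2π/L)(Hh′)(φ(α*)) + v₁(α*)·a + R`, `|R| ≤ C·a⁴`, `C = C(m₁,m₂,L)`. -/
theorem stmt_13 (L m₁ m₂ : ℝ) (hL : 0 < L) (hm₁ : 0 < m₁) (hm₂ : 0 < m₂) :
    ∃ C : ℝ, 0 < C ∧
      ∀ N : ℕ, 2 ≤ N →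
        ∀ h φ Hh' : ℝ → ℝ,
          ContDiff ℝ 6 h →
          (∀ x : ℝ, deriv h x < 0) →
          (∀ x : ℝ, h (x + L) = h x - 1) →
          (∀ α : ℝ, h (φ α) = α) →
          (∀ α : ℝ, deriv φ α ≤ -m₁) →
          (∀ k : ℕ, 1 ≤ k → k ≤ 6 → ∀ α : ℝ, |iteratedDeriv k φ α| ≤ m₂) →
          (∀ x : ℝ, Tendsto (fun δ : ℝ =>
              (1 / L) * ∫ s in δ..(L - δ), deriv h (x - s) * Real.cot (π * s / L))
            (𝓝[>] (0:ℝ)) (𝓝 (Hh' x))) →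
          ∀ i₀ : ℕ, 1 ≤ i₀ → i₀ ≤ N - 1 →
            ∃ R : ℝ,
              -(2 * π * (N:ℝ)⁻¹ / L ^ 2) *
                  (∑ j ∈ (Finset.range N).erase i₀,
                    Real.cot (π * (φ ((j:ℝ)/(N:ℝ)) - φ ((i₀:ℝ)/(N:ℝ))) / L))
                = -(2 * π / L) * Hh' (φ ((i₀:ℝ)/(N:ℝ)))
                  + v1coef L φ ((i₀:ℝ)/(N:ℝ)) * (N:ℝ)⁻¹ + R ∧
              |R| ≤ C * (N:ℝ)⁻¹ ^ 4 := by
  obtain ⟨M, hM⟩ := G_exists L m₁ m₂ hL hm₁ hm₂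
  have hπ := pi_pos
  refine ⟨2 * π / L ^ 2 * (2 * |M|) + 1, by positivity, ?_⟩
  intro N hN h φ Hh' hh hneg hper hinv hd hb hH i₀ hi1 hi2
  have hN0 : (0:ℝ) < N := by exact_mod_cast (by omega : 0 < N)
  have hiN : i₀ < N := by omega
  have hanti : StrictAnti h := strictAnti_of_deriv_neg hneg
  have hinv' : ∀ x, φ (h x) = x := fun x => hanti.injective (hinv (h x))
  have hφd : Differentiable ℝ φ := fun α =>
    differentiableAt_of_deriv_ne_zero (by have := hd α; intro h; linarith)
  have hhd : Differentiable ℝ h := hh.differentiable (by norm_num)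
  let e : ℝ ≃ₜ ℝ :=
    { toFun := h, invFun := φ, left_inv := hinv', right_inv := hinv,
      continuous_toFun := hhd.continuous, continuous_invFun := hφd.continuous }
  have hφ : ContDiff ℝ 6 φ :=
    e.contDiff_symm_deriv (f' := deriv h) (fun x => (hneg x).ne) (fun x => (hhd x).hasDerivAt) hh
  have hφper : ∀ α, φ (α + 1) = φ α - L := by
    intro α
    apply hanti.injective
    have := hper (φ α - L)
    rw [sub_add_cancel, hinv] at this
    rw [hinv]; linarith
  set α := (i₀:ℝ) / (N:ℝ) with hα
  obtain ⟨G, hG4, hGp, hGb, hGe, hG0⟩ := hM φ hφ hφper hd hb α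
  have hp0 : deriv φ α ≠ 0 := by have := hd α; intro h; linarith
  have hpv := pv_lim L hL h φ G (deriv φ α) α hh hneg hper hinv hinv' hG4.continuous hGe
  have hHe : Hh' (φ α) = (1 / L) * ∫ t in (0:ℝ)..1, G t :=
    tendsto_nhds_unique (hH (φ α)) (hpv.const_mul (1 / L))
  have htr := trap N (by omega) 4 G hG4 hGp M hGb (-α)
  set I := ∫ t in (0:ℝ)..1, G t
  have hsum : ∑ j ∈ (Finset.range N).erase i₀, Real.cot (π * (φ ((j:ℝ)/(N:ℝ)) - φ α) / L)
      = (∑ j ∈ Finset.range N, G (-α + j / N)) - G 0 := by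
    have h1 : ∀ j ∈ (Finset.range N).erase i₀, Real.cot (π * (φ ((j:ℝ)/(N:ℝ)) - φ α) / L)
        = G (-α + j / N) + (L / deriv φ α) * Real.cot (π * (((j:ℝ) - i₀) / N)) := by
      intro j hj
      simp only [Finset.mem_erase, Finset.mem_range] at hj
      have e1 : ((j:ℝ) - i₀) / N = -α + j / N := by rw [hα]; ring
      rw [e1, ← hGe, show α + (-α + (j:ℝ) / N) = j / N by ring]
      rw [← e1]
      have hji : (j:ℝ) - i₀ ≠ 0 := by
        rw [sub_ne_zero]; exact_mod_cast hj.1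
      have hlt : |(j:ℝ) - i₀| < N := by
        have a1 : (j:ℝ) < N := by exact_mod_cast hj.2
        have a2 : (i₀:ℝ) < N := by exact_mod_cast hiN
        have a3 : (0:ℝ) ≤ j := by positivity
        have a4 : (0:ℝ) ≤ i₀ := by positivity
        rw [abs_lt]; constructor <;> linarith
      apply sin_ne
      · exact mul_ne_zero hπ.ne' (div_ne_zero hji hN0.ne')
      · rw [abs_mul, abs_div, abs_of_pos hπ, abs_of_pos hN0]
        have : |(j:ℝ) - i₀| / N < 1 := by rw [div_lt_one hN0]; exact hlt
        nlinarith
    rw [Finset.sum_congr rfl h1, Finset.sum_add_distrib, ← Finset.mul_sum, cot_sum N i₀ hiN,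
      mul_zero, add_zero, ← Finset.sum_erase_add _ _ (Finset.mem_range.2 hiN)]
    rw [show -α + (i₀:ℝ) / N = 0 by rw [hα]; ring]
    ring
  set S := ∑ j ∈ Finset.range N, G (-α + j / N)
  refine ⟨-(2 * π / L ^ 2) * ((N:ℝ)⁻¹ * S - I), ?_, ?_⟩
  · rw [hsum, hHe, hG0, v1coef]
    field_simp
    ring
  · rw [abs_mul, abs_neg, abs_of_pos (by positivity : 0 < 2 * π / L ^ 2)]
    have hMM : M ≤ |M| := le_abs_self M
    have hp4 : (0:ℝ) ≤ (N:ℝ)⁻¹ ^ 4 := by positivity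
    calc _ ≤ 2 * π / L ^ 2 * (2 * M * (N:ℝ)⁻¹ ^ 4) := by gcongr
      _ ≤ 2 * π / L ^ 2 * (2 * |M| * (N:ℝ)⁻¹ ^ 4) := by gcongr
      _ ≤ _ := by linarith
end
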